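/- Suppose α > β > 0 and I_sdp(α,β) > 1. Then, for (σ, ℋ) ∼ HSBM(n,p,q;k), the semidefinite program with input W = W(ℋ) has σσᵀ as its unique optimal solution (i.e. Σ̂(ℋ) = σσᵀ) with probability 1 − o(1) as n → ∞. -/

import Mathlib

open Finset Filter Matrix

open scoped Classical

/-- The `k`-element subsets of `[n]`, i.e. the potential hyperedges. -/
abbrev KSet (n k : ℕ) := {e : Finset (Fin n) // e.card = k}

/-- A `±1` label vector (encoded by `Bool`) is balanced if it has equally many
`+1`'s (`true`) and `-1`'s (`false`). -/
abbrev balanced {n : ℕ} (σ : Fin n → Bool) : Prop :=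
  2 * (Finset.univ.filter (fun i => σ i = true)).card = n

/-- `e` is in-cluster w.r.t. `σ`: `σ` is constant on `e`. -/
abbrev inCluster {n : ℕ} (σ : Fin n → Bool) (e : Finset (Fin n)) : Prop :=
  ∀ i ∈ e, ∀ j ∈ e, σ i = σ j

/-- Probability that `e` appears as an edge, given the labels `σ`. -/
noncomputable def edgeP {n : ℕ} (p q : ℝ) (σ : Fin n → Bool) (e : Finset (Fin n)) : ℝ :=
  if inCluster σ e then p else q

/-- Probability of observing exactly the hypergraph with edge-indicator `E`, given labels `σ`
(edges appear independently). -/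
noncomputable def hypProb {n k : ℕ} (p q : ℝ) (σ : Fin n → Bool) (E : KSet n k → Bool) : ℝ :=
  ∏ e : KSet n k, if E e then edgeP p q σ e.1 else 1 - edgeP p q σ e.1

/-- Uniform prior on balanced label vectors. -/
noncomputable def sigProb (n : ℕ) (σ : Fin n → Bool) : ℝ :=
  if balanced σ then 1 / ((Finset.univ.filter (fun τ : Fin n → Bool => balanced τ)).card : ℝ)
  else 0

/-- Probability of an event `P` under the joint law `HSBM(n,p,q;k)` of `(σ, ℋ)`. -/
noncomputable def prEvent (n k : ℕ) (p q : ℝ)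
    (P : (Fin n → Bool) → (KSet n k → Bool) → Prop) : ℝ :=
  ∑ σ : Fin n → Bool, ∑ E : KSet n k → Bool,
    sigProb n σ * hypProb p q σ E * (if P σ E then 1 else 0)

/-- Global sign flip. -/
def negB {n : ℕ} (σ : Fin n → Bool) : Fin n → Bool := fun i => !(σ i)

/-- The edge probability parameter `α · log n / C(n-1, k-1)`. -/
noncomputable def pParam (k : ℕ) (α : ℝ) (n : ℕ) : ℝ :=
  α * Real.log n / ((n - 1).choose (k - 1) : ℝ)

/-- The real `±1` vector associated to a Boolean label vector. -/
def sgn {n : ℕ} (σ : Fin n → Bool) : Fin n → ℝ := fun i => if σ i then 1 else -1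

/-- The rank-one matrix `σσᵀ`. -/
noncomputable def outer {n : ℕ} (σ : Fin n → Bool) : Matrix (Fin n) (Fin n) ℝ :=
  Matrix.of fun i j => sgn σ i * sgn σ j

/-- The weighted adjacency matrix `W(H)`: `W i j` is the number of hyperedges containing
both `i` and `j` (zero on the diagonal). -/
noncomputable def Wmat {n k : ℕ} (E : KSet n k → Bool) : Matrix (Fin n) (Fin n) ℝ :=
  Matrix.of fun i j => if i = j then 0 else
    ((Finset.univ.filter (fun e : KSet n k => E e = true ∧ i ∈ e.1 ∧ j ∈ e.1)).card : ℝ)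

/-- Feasibility for the SDP relaxation: `X ⪰ 0`, unit diagonal, `⟨X, 𝟙𝟙ᵀ⟩ = 0`. -/
def sdpFeasible {n : ℕ} (X : Matrix (Fin n) (Fin n) ℝ) : Prop :=
  X.PosSemidef ∧ (∀ i, X i i = 1) ∧ (∑ i, ∑ j, X i j) = 0

/-- The SDP objective `⟨W, X⟩`. -/
noncomputable def sdpObj {n : ℕ} (W X : Matrix (Fin n) (Fin n) ℝ) : ℝ :=
  ∑ i, ∑ j, W i j * X i j

/-- `Xs` is the unique optimal solution of the SDP with input `W`. -/
def sdpUniqueOpt {n : ℕ} (W Xs : Matrix (Fin n) (Fin n) ℝ) : Prop :=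
  sdpFeasible Xs ∧ ∀ X, sdpFeasible X → X ≠ Xs → sdpObj W X < sdpObj W Xs

/-- `Γ = diag(σ) W diag(σ)`. -/
noncomputable def GammaM {n : ℕ} (σ : Fin n → Bool) (W : Matrix (Fin n) (Fin n) ℝ) :
    Matrix (Fin n) (Fin n) ℝ :=
  Matrix.diagonal (sgn σ) * W * Matrix.diagonal (sgn σ)

/-- The Laplacian `L_Γ = diag(Γ𝟙) - Γ`. -/
noncomputable def LGamma {n : ℕ} (σ : Fin n → Bool) (W : Matrix (Fin n) (Fin n) ℝ) :
    Matrix (Fin n) (Fin n) ℝ :=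
  Matrix.diagonal (fun i => ∑ j, GammaM σ W i j) - GammaM σ W

/-- `Π = I - (1/n)𝟙𝟙ᵀ - (1/n)σσᵀ`, the projector onto `span{𝟙, σ}ᗮ`. -/
noncomputable def PiM {n : ℕ} (σ : Fin n → Bool) : Matrix (Fin n) (Fin n) ℝ :=
  1 - (n : ℝ)⁻¹ • Matrix.of (fun _ _ => (1 : ℝ)) - (n : ℝ)⁻¹ • outer σ

/-- The third-smallest eigenvalue of a symmetric matrix, via the Courant–Fischer
max–min characterization over subspaces of dimension `n - 2`. -/
noncomputable def lambda3 {n : ℕ} (M : Matrix (Fin n) (Fin n) ℝ) : ℝ :=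
  sSup {r : ℝ | ∃ V : Submodule ℝ (Fin n → ℝ), Module.finrank ℝ V = n - 2 ∧
    ∀ x ∈ V, r * (∑ i, x i ^ 2) ≤ x ⬝ᵥ M.mulVec x}

open MeasureTheory ProbabilityTheory Topology

/-!
The matrix `σσᵀ` is the unique optimum as soon as its dual certificate, the slack matrix
`diag(d) - W` with `d` the vector of signed degrees `dᵢ = ∑ⱼ Wᵢⱼ σᵢ σⱼ`, is positive definite on the
orthogonal complement of `𝟙` and `σ`. Write `W = 𝔼W + (W - 𝔼W)`. For balanced `σ` the matrix `𝔼W` is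
a combination of `𝟙𝟙ᵀ`, `σσᵀ` and a nonpositive multiple of the identity, so it does not hurt on
that complement. It remains to see that, for some `ε > 0`, with high probability all signed degrees
are at least `ε log n`, while `yᵀ(W - 𝔼W)y ≤ (ε / 2) log n |y|²` for all `y`.

* A Chernoff bound with parameter `θ = 2ᵏ / ((α - β)(k - 1))` shows that `dᵢ` is small with
  probability at most `n ^ (-1 - δ)`, which beats the union bound over the `n` vertices. The
  estimates `cosh x ≤ exp (x² / 2)` and `exp (-u) ≤ 1 - u + u² / 2` turn the condition that the
  exponent be below `-1` into `I_sdp > 1`.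
* The quadratic form of `W - 𝔼W` is bounded by the method of Friedman–Kahn–Szemerédi and
  Feige–Ofek. Since the diagonal vanishes, `y` may be rounded to an integer vector `z` with
  `|z|² ≤ 4n`, of which there are only `exp (O(n))`. The pairs with `|zᵢ zⱼ|` at most a small
  multiple of `log n` are handled by a Chernoff bound for each `z`; the other pairs are handled by
  the boundedness of all degrees by `O(log n)` and the sparsity of `W` on all small vertex sets.
-/

/-! ### Independent Bernoulli variables -/

section BernoulliPi

variable {ι : Type*} [Fintype ι]

/-- The law of a family of independent Boolean variables, the `i`-th of which is `true` with
probability `p i`. -/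
noncomputable def bernoulliPi (p : ι → unitInterval) : Measure (ι → Bool) :=
  Measure.pi fun i => bernoulliMeasure true false (p i)

instance (p : ι → unitInterval) : IsProbabilityMeasure (bernoulliPi p) := by
  unfold bernoulliPi; infer_instance

lemma bernoulliPi_real_singleton (p : ι → unitInterval) (E : ι → Bool) :
    (bernoulliPi p).real {E} = ∏ i, if E i then (p i : ℝ) else 1 - p i := by
  rw [bernoulliPi, measureReal_def, Measure.pi_singleton, ENNReal.toReal_prod]
  refine prod_congr rfl fun i _ => ?_
  rw [← measureReal_def, bernoulliMeasure_real_apply (p i) (measurableSet_singleton _)]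
  cases E i <;> simp

lemma bernoulliPi_real_setOf (p : ι → unitInterval) (A : (ι → Bool) → Prop) :
    (bernoulliPi p).real {E | A E} =
      ∑ E, (∏ i, if E i then (p i : ℝ) else 1 - p i) * if A E then 1 else 0 := by
  simp_rw [mul_ite, mul_one, mul_zero, ← sum_filter, ← bernoulliPi_real_singleton]
  rw [sum_measureReal_singleton, coe_filter_univ]

lemma integral_exp_sum_bernoulliPi (p : ι → unitInterval) (c : ι → ℝ) :
    ∫ E, Real.exp (∑ i, if E i then c i else 0) ∂bernoulliPi p =
      ∏ i, (1 + (p i : ℝ) * (Real.exp (c i) - 1)) := by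
  simp_rw [Real.exp_sum]
  rw [bernoulliPi,
    integral_fintype_prod_eq_prod fun i (b : Bool) => Real.exp (if b then c i else 0)]
  refine prod_congr rfl fun i _ => ?_
  rw [integral_bernoulliMeasure]
  simp only [↓reduceIte, smul_eq_mul, Bool.false_eq_true, Real.exp_zero, mul_one]
  ring

lemma bernoulliPi_real_le_sum_le (p : ι → unitInterval) (c : ι → ℝ) (t : ℝ) :
    (bernoulliPi p).real {E | t ≤ ∑ i, if E i then c i else 0} ≤
      Real.exp (∑ i, p i * (Real.exp (c i) - 1) - t) := by
  have markov := measure_ge_le_exp_mul_mgf (μ := bernoulliPi p)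
    (X := fun E => ∑ i, if E i then c i else 0) t zero_le_one .of_finite
  simp only [mgf, one_mul, neg_mul, integral_exp_sum_bernoulliPi] at markov
  refine markov.trans ?_
  rw [sub_eq_neg_add, Real.exp_add, Real.exp_sum]
  refine mul_le_mul_of_nonneg_left (prod_le_prod (fun i _ => ?_) fun i _ => ?_) (Real.exp_nonneg _)
  · have := (p i).2.1
    have := (p i).2.2
    nlinarith [Real.exp_pos (c i)]
  · linarith [Real.add_one_le_exp (p i * (Real.exp (c i) - 1))]

end BernoulliPi

/-! ### Weighted adjacency matrices of random hypergraphs -/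

section Adjacency

variable {n k : ℕ}

/-- The zero-diagonal matrix whose `(i, j)` entry is the total weight of the `k`-sets containing
both `i` and `j`. -/
noncomputable def weightedAdj (w : KSet n k → ℝ) : Matrix (Fin n) (Fin n) ℝ :=
  Matrix.of fun i j => if i = j then 0 else ∑ e : KSet n k with i ∈ e.1 ∧ j ∈ e.1, w e

/-- The expectation of `Wmat E` when `E` has law `bernoulliPi P`. -/
noncomputable def meanAdj (P : KSet n k → unitInterval) : Matrix (Fin n) (Fin n) ℝ :=
  weightedAdj fun e => (P e : ℝ)

/-- The sum of the entries of `F` over the ordered pairs of distinct elements of `e`, i.e. the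
contribution of the hyperedge `e` to `⟨W, F⟩`. -/
noncomputable def pairSum (F : Matrix (Fin n) (Fin n) ℝ) (e : Finset (Fin n)) : ℝ :=
  ∑ x ∈ e.offDiag, F x.1 x.2

lemma weightedAdj_symm (w : KSet n k → ℝ) (i j : Fin n) :
    weightedAdj w i j = weightedAdj w j i := by
  simp only [weightedAdj, of_apply, eq_comm (a := i), and_comm (a := i ∈ _)]

lemma weightedAdj_self (w : KSet n k → ℝ) (i : Fin n) : weightedAdj w i i = 0 := by
  simp [weightedAdj]

lemma weightedAdj_nonneg {w : KSet n k → ℝ} (hw : ∀ e, 0 ≤ w e) (i j : Fin n) :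
    0 ≤ weightedAdj w i j := by
  rw [weightedAdj, of_apply]
  split_ifs
  exacts [le_rfl, sum_nonneg fun e _ => hw e]

lemma Wmat_eq_weightedAdj (E : KSet n k → Bool) :
    Wmat E = weightedAdj fun e => if E e then 1 else 0 := by
  ext i j
  simp only [Wmat, weightedAdj, of_apply, sum_boole, filter_filter, and_comm (a := E _ = true)]

lemma Wmat_symm (E : KSet n k → Bool) (i j : Fin n) : Wmat E i j = Wmat E j i := by
  simp only [Wmat_eq_weightedAdj, weightedAdj_symm _ i]

lemma Wmat_nonneg (E : KSet n k → Bool) (i j : Fin n) : 0 ≤ Wmat E i j := by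
  rw [Wmat_eq_weightedAdj]
  exact weightedAdj_nonneg (fun e => by positivity) i j

lemma meanAdj_nonneg (P : KSet n k → unitInterval) (i j : Fin n) : 0 ≤ meanAdj P i j :=
  weightedAdj_nonneg (fun e => (P e).2.1) i j

lemma sdpObj_sub_left (W W' F : Matrix (Fin n) (Fin n) ℝ) :
    sdpObj (W - W') F = sdpObj W F - sdpObj W' F := by
  simp only [sdpObj, Matrix.sub_apply, sub_mul, sum_sub_distrib]

lemma sdpObj_weightedAdj (w : KSet n k → ℝ) (F : Matrix (Fin n) (Fin n) ℝ) :
    sdpObj (weightedAdj w) F = ∑ e, w e * pairSum F e.1 := by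
  have pairSum_eq (e : Finset (Fin n)) : pairSum F e =
      ∑ i, ∑ j, if i ≠ j ∧ i ∈ e ∧ j ∈ e then F i j else 0 := by
    rw [← Fintype.sum_prod_type', pairSum, ← sum_filter]
    congr 1
    ext x
    simp only [mem_offDiag, mem_filter_univ]
    tauto
  simp_rw [pairSum_eq, mul_sum, sdpObj]
  rw [sum_comm (s := (univ : Finset (KSet n k)))]
  refine sum_congr rfl fun i _ => ?_
  rw [sum_comm]
  refine sum_congr rfl fun j _ => ?_
  by_cases hij : i = j <;> simp [weightedAdj, hij, sum_mul, sum_filter, ite_mul]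

lemma sdpObj_Wmat (E : KSet n k → Bool) (F : Matrix (Fin n) (Fin n) ℝ) :
    sdpObj (Wmat E) F = ∑ e, if E e then pairSum F e.1 else 0 := by
  simp only [Wmat_eq_weightedAdj, sdpObj_weightedAdj, ite_mul, one_mul, zero_mul]

lemma sdpObj_mono_left {W W' F : Matrix (Fin n) (Fin n) ℝ} (hW : ∀ i j, W i j ≤ W' i j)
    (hF : ∀ i j, 0 ≤ F i j) : sdpObj W F ≤ sdpObj W' F :=
  sum_le_sum fun i _ => sum_le_sum fun j _ => mul_le_mul_of_nonneg_right (hW i j) (hF i j)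

lemma sum_mul_pairSum_le {w : KSet n k → ℝ} {ρ : ℝ} (hw : ∀ i j, weightedAdj w i j ≤ ρ)
    {F : Matrix (Fin n) (Fin n) ℝ} (hF : ∀ i j, 0 ≤ F i j) :
    ∑ e, w e * pairSum F e.1 ≤ ρ * ∑ i, ∑ j, F i j := by
  rw [← sdpObj_weightedAdj]
  simpa only [sdpObj, of_apply, ← mul_sum] using
    sdpObj_mono_left (W' := Matrix.of fun _ _ => ρ) hw hF

lemma pairSum_nonneg {F : Matrix (Fin n) (Fin n) ℝ} (hF : ∀ i j, 0 ≤ F i j)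
    (e : Finset (Fin n)) : 0 ≤ pairSum F e :=
  sum_nonneg fun _ _ => hF _ _

lemma card_offDiag_le_sq (e : Finset (Fin n)) : (#e.offDiag : ℝ) ≤ (#e : ℝ) ^ 2 := by
  rw [offDiag_card, sq]
  exact_mod_cast Nat.sub_le _ _

lemma abs_pairSum_le {F : Matrix (Fin n) (Fin n) ℝ} {T : ℝ} (hT : 0 ≤ T)
    (hF : ∀ i j, |F i j| ≤ T) (e : Finset (Fin n)) : |pairSum F e| ≤ (#e : ℝ) ^ 2 * T := by
  calc |pairSum F e| ≤ ∑ x ∈ e.offDiag, |F x.1 x.2| := abs_sum_le_sum_abs _ _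
    _ ≤ #e.offDiag * T := by
      rw [← nsmul_eq_mul]
      exact sum_le_card_nsmul _ _ _ fun x _ => hF _ _
    _ ≤ (#e : ℝ) ^ 2 * T := mul_le_mul_of_nonneg_right (card_offDiag_le_sq e) hT

lemma pairSum_sq_le (F : Matrix (Fin n) (Fin n) ℝ) (e : Finset (Fin n)) :
    pairSum F e ^ 2 ≤ (#e : ℝ) ^ 2 * pairSum (F.map (· ^ 2)) e :=
  sq_sum_le_card_mul_sum_sq.trans <| mul_le_mul_of_nonneg_right (card_offDiag_le_sq e) <|
    sum_nonneg fun _ _ => sq_nonneg _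

lemma exp_sub_one_le_mul_exp {x b : ℝ} (hx : 0 ≤ x) (hxb : x ≤ b) :
    Real.exp x - 1 ≤ x * Real.exp b := by
  calc Real.exp x - 1 = (1 - Real.exp (-x)) * Real.exp x := by
        rw [sub_mul, ← Real.exp_add]; simp
    _ ≤ x * Real.exp x := by gcongr; linarith [Real.add_one_le_exp (-x)]
    _ ≤ x * Real.exp b := by gcongr

lemma bernoulliPi_real_le_sdpObj_le (P : KSet n k → unitInterval) (F : Matrix (Fin n) (Fin n) ℝ)
    {θ : ℝ} (hθ : 0 < θ) (t : ℝ) :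
    (bernoulliPi P).real {E | t ≤ sdpObj (Wmat E) F} ≤
      Real.exp (∑ e, P e * (Real.exp (θ * pairSum F e.1) - 1) - θ * t) := by
  convert bernoulliPi_real_le_sum_le P (fun e => θ * pairSum F e.1) (θ * t) using 4 with E
  rw [← mul_le_mul_iff_right₀ hθ, sdpObj_Wmat, mul_sum]
  simp only [mul_ite, mul_zero]

lemma bernoulliPi_real_le_sdpObj_of_nonneg (P : KSet n k → unitInterval) {ρ : ℝ}
    (hρ : ∀ i j, meanAdj P i j ≤ ρ) {F : Matrix (Fin n) (Fin n) ℝ} (hF : ∀ i j, 0 ≤ F i j)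
    (hF1 : ∀ i j, F i j ≤ 1) {θ : ℝ} (hθ : 0 < θ) (t : ℝ) :
    (bernoulliPi P).real {E | t ≤ sdpObj (Wmat E) F} ≤
      Real.exp (θ * Real.exp (θ * (k : ℝ) ^ 2) * (ρ * ∑ i, ∑ j, F i j) - θ * t) := by
  refine (bernoulliPi_real_le_sdpObj_le P F hθ t).trans ?_
  have edge_bound (e : KSet n k) : P e * (Real.exp (θ * pairSum F e.1) - 1) ≤
      θ * Real.exp (θ * (k : ℝ) ^ 2) * (P e * pairSum F e.1) := by
    have nonneg := pairSum_nonneg hF e.1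
    have le_sq : pairSum F e.1 ≤ (k : ℝ) ^ 2 := by
      have := abs_pairSum_le zero_le_one (fun i j => (abs_of_nonneg (hF i j)).trans_le (hF1 i j))
        e.1
      rw [e.2, mul_one] at this
      exact (le_abs_self _).trans this
    have := exp_sub_one_le_mul_exp (mul_nonneg hθ.le nonneg)
      (mul_le_mul_of_nonneg_left le_sq hθ.le)
    exact (mul_le_mul_of_nonneg_left this (P e).2.1).trans_eq (by ring)
  gcongr
  calc ∑ e, P e * (Real.exp (θ * pairSum F e.1) - 1)
      ≤ θ * Real.exp (θ * (k : ℝ) ^ 2) * ∑ e, P e * pairSum F e.1 := by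
        rw [mul_sum]
        exact sum_le_sum fun e _ => edge_bound e
    _ ≤ θ * Real.exp (θ * (k : ℝ) ^ 2) * (ρ * ∑ i, ∑ j, F i j) := by
        gcongr
        exact sum_mul_pairSum_le hρ hF

lemma bernoulliPi_real_le_sdpObj_sub_meanAdj (P : KSet n k → unitInterval) {ρ : ℝ}
    (hρ : ∀ i j, meanAdj P i j ≤ ρ) {F : Matrix (Fin n) (Fin n) ℝ} {T : ℝ} (hT : 0 ≤ T)
    (hF : ∀ i j, |F i j| ≤ T) {θ : ℝ} (hθ : 0 < θ) (hθT : θ * ((k : ℝ) ^ 2 * T) ≤ 1) (t : ℝ) :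
    (bernoulliPi P).real {E | t ≤ sdpObj (Wmat E - meanAdj P) F} ≤
      Real.exp (θ ^ 2 * (k : ℝ) ^ 2 * (ρ * ∑ i, ∑ j, F i j ^ 2) - θ * t) := by
  have mean : sdpObj (meanAdj P) F = ∑ e, P e * pairSum F e.1 := sdpObj_weightedAdj _ F
  simp only [sdpObj_sub_left, le_sub_iff_add_le]
  refine (bernoulliPi_real_le_sdpObj_le P F hθ _).trans (Real.exp_le_exp.2 ?_)
  have edge_bound (e : KSet n k) : P e * (Real.exp (θ * pairSum F e.1) - 1) ≤
      θ * (P e * pairSum F e.1)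
        + θ ^ 2 * (k : ℝ) ^ 2 * (P e * pairSum (F.map (· ^ 2)) e.1) := by
    have abs_bound := abs_pairSum_le hT hF e.1
    have sq_bound := pairSum_sq_le F e.1
    rw [e.2] at abs_bound sq_bound
    have small : |θ * pairSum F e.1| ≤ 1 := by
      rw [abs_mul, abs_of_pos hθ]
      exact (mul_le_mul_of_nonneg_left abs_bound hθ.le).trans hθT
    have exp_le : Real.exp (θ * pairSum F e.1) - 1 ≤ θ * pairSum F e.1
        + θ ^ 2 * ((k : ℝ) ^ 2 * pairSum (F.map (· ^ 2)) e.1) := by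
      linarith [(abs_le.1 (Real.abs_exp_sub_one_sub_id_le small)).2, mul_pow θ (pairSum F e.1) 2,
        mul_le_mul_of_nonneg_left sq_bound (sq_nonneg θ)]
    exact (mul_le_mul_of_nonneg_left exp_le (P e).2.1).trans_eq (by ring)
  have sum_bound := sum_le_sum fun e (_ : e ∈ univ) => edge_bound e
  rw [sum_add_distrib, ← mul_sum, ← mul_sum, ← mean] at sum_bound
  have second_moment := mul_le_mul_of_nonneg_left
    (sum_mul_pairSum_le hρ (F := F.map (· ^ 2)) fun i j => sq_nonneg _)
    (show 0 ≤ θ ^ 2 * (k : ℝ) ^ 2 by positivity)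
  simp only [map_apply] at second_moment
  linarith

end Adjacency

/-! ### Rounding a quadratic form -/

section Rounding

variable {ι : Type*} [Fintype ι] {M : Matrix ι ι ℝ}

lemma update_dotProduct_mulVec_update {a : ι} (hM : M a a = 0) (y : ι → ℝ) (t : ℝ) :
    Function.update y a t ⬝ᵥ M *ᵥ Function.update y a t =
      y ⬝ᵥ M *ᵥ y + ((M *ᵥ y) a + (y ᵥ* M) a) * (t - y a) := by
  have update_eq : Function.update y a t = y + (t - y a) • Pi.single a 1 := by
    ext i
    obtain rfl | hi := eq_or_ne i a <;> simp [*]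
  have diag : (M *ᵥ Pi.single a 1) a = 0 := by simp [hM]
  simp only [update_eq, mulVec_add, mulVec_smul, add_dotProduct, dotProduct_add, smul_dotProduct,
    dotProduct_smul, smul_eq_mul, single_one_dotProduct, diag,
    dotProduct_mulVec y M (Pi.single a 1), dotProduct_single_one]
  ring

lemma exists_int_abs_sub_le_one_and_mul_nonneg (l x : ℝ) :
    ∃ z : ℤ, |(z : ℝ) - x| ≤ 1 ∧ 0 ≤ l * (z - x) := by
  obtain hl | hl := le_total 0 l
  · refine ⟨⌈x⌉, abs_le.2 ⟨?_, ?_⟩, mul_nonneg hl (sub_nonneg.2 (Int.le_ceil x))⟩ <;>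
      linarith [Int.le_ceil x, Int.ceil_lt_add_one x]
  · refine ⟨⌊x⌋, abs_le.2 ⟨?_, ?_⟩,
      mul_nonneg_of_nonpos_of_nonpos hl (sub_nonpos.2 (Int.floor_le x))⟩ <;>
      linarith [Int.floor_le x, Int.lt_floor_add_one x]

-- A quadratic form with zero diagonal is affine in each coordinate, so one of the two roundings
-- of a coordinate does not decrease it.
lemma exists_int_dotProduct_mulVec_le (hM : ∀ i, M i i = 0) (x : ι → ℝ) :
    ∃ z : ι → ℤ, (∀ i, |(z i : ℝ) - x i| ≤ 1) ∧
      x ⬝ᵥ M *ᵥ x ≤ (fun i => (z i : ℝ)) ⬝ᵥ M *ᵥ fun i => (z i : ℝ) := by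
  suffices rounding : ∀ s : Finset ι, ∃ z : ι → ℤ, (∀ i ∈ s, |(z i : ℝ) - x i| ≤ 1) ∧
      x ⬝ᵥ M *ᵥ x ≤
        s.piecewise (fun i => (z i : ℝ)) x ⬝ᵥ M *ᵥ s.piecewise (fun i => (z i : ℝ)) x by
    simpa using rounding univ
  intro s
  induction s using Finset.induction_on with
  | empty => exact ⟨0, by simp⟩
  | insert a s ha ih =>
    obtain ⟨z, close, increase⟩ := ih
    set y := s.piecewise (fun i => (z i : ℝ)) x
    obtain ⟨t, t_close, t_increase⟩ :=
      exists_int_abs_sub_le_one_and_mul_nonneg ((M *ᵥ y) a + (y ᵥ* M) a) (x a)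
    have piecewise_eq : (insert a s).piecewise (fun i => (Function.update z a t i : ℝ)) x =
        Function.update y a t := by
      rw [piecewise_insert, Function.update_self]
      congr 1
      refine piecewise_congr _ (fun i hi => ?_) fun _ _ => rfl
      rw [Function.update_of_ne (ne_of_mem_of_not_mem hi ha)]
    refine ⟨Function.update z a t, fun i hi => ?_, ?_⟩
    · obtain rfl | hia := eq_or_ne i a
      · simpa using t_close
      · simpa [hia] using close i (mem_of_mem_insert_of_ne hi hia)
    · rw [piecewise_eq, update_dotProduct_mulVec_update (hM a),
        show y a = x a from piecewise_eq_of_notMem _ _ _ ha]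
      linarith

lemma dotProduct_mulVec_le_of_forall_int [Nonempty ι] (hM : ∀ i, M i i = 0) {K : ℝ}
    (h : ∀ z : ι → ℤ, ∑ i, (z i : ℝ) ^ 2 ≤ 4 * Fintype.card ι →
      (fun i => (z i : ℝ)) ⬝ᵥ M *ᵥ (fun i => (z i : ℝ)) ≤ K * Fintype.card ι) (y : ι → ℝ) :
    y ⬝ᵥ M *ᵥ y ≤ K * (y ⬝ᵥ y) := by
  obtain rfl | hy := eq_or_ne y 0
  · simp
  have card_pos : (0 : ℝ) < Fintype.card ι := by exact_mod_cast Fintype.card_pos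
  have norm_pos : 0 < y ⬝ᵥ y :=
    (dotProduct_self_star_nonneg y).lt_of_ne' (dotProduct_self_eq_zero.not.2 hy)
  set r := √(Fintype.card ι / (y ⬝ᵥ y))
  have r_sq : r ^ 2 = Fintype.card ι / (y ⬝ᵥ y) := Real.sq_sqrt (by positivity)
  obtain ⟨z, close, increase⟩ := exists_int_dotProduct_mulVec_le hM (r • y)
  have z_small : ∑ i, (z i : ℝ) ^ 2 ≤ 4 * Fintype.card ι := by
    calc ∑ i, (z i : ℝ) ^ 2 ≤ ∑ i, (2 * r ^ 2 * (y i * y i) + 2) := by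
          refine sum_le_sum fun i _ => ?_
          obtain ⟨_, _⟩ := abs_le.1 (close i)
          simp only [Pi.smul_apply, smul_eq_mul] at *
          nlinarith [sq_nonneg ((z i : ℝ) - 2 * (r * y i))]
      _ = 2 * r ^ 2 * (y ⬝ᵥ y) + 2 * Fintype.card ι := by
          simp [sum_add_distrib, mul_sum, dotProduct, mul_comm]
      _ = 4 * Fintype.card ι := by rw [r_sq]; field_simp; ring
  have scaled := increase.trans (h z z_small)
  rw [mulVec_smul, dotProduct_smul, smul_dotProduct, smul_eq_mul, smul_eq_mul, ← mul_assoc, ← sq,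
    r_sq, div_mul_eq_mul_div, div_le_iff₀ norm_pos, mul_right_comm, mul_comm] at scaled
  exact le_of_mul_le_mul_right scaled card_pos

end Rounding

/-! ### Light and heavy pairs -/

section HeavyPairs

lemma natCast_min_eq_sum {a b N : ℕ} (ha : a ≤ N) :
    ((min a b : ℕ) : ℝ) = ∑ s ∈ range N, if s < a ∧ s < b then (1 : ℝ) else 0 := by
  rw [sum_boole, show {s ∈ range N | s < a ∧ s < b} = range (min a b) by grind, card_range]

lemma natCast_eq_sum {a N : ℕ} (ha : a ≤ N) :
    (a : ℝ) = ∑ s ∈ range N, if s < a then (1 : ℝ) else 0 := by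
  simpa only [min_self, and_self] using natCast_min_eq_sum (b := a) ha

-- Layer-cake decomposition: `min (m i) (m j)` counts the levels `s` below both `m i` and `m j`.
lemma sum_mul_min_le_of_forall_subset {ι : Type*} (M : ι → ι → ℝ) (m : ι → ℕ) {A : Finset ι}
    {K : ℝ} (h : ∀ S ⊆ A, ∑ i ∈ S, ∑ j ∈ S, M i j ≤ K * #S) :
    ∑ i ∈ A, ∑ j ∈ A, M i j * (min (m i) (m j) : ℕ) ≤ K * ∑ i ∈ A, (m i : ℝ) := by
  set N := ∑ i ∈ A, m i
  have m_le (i) (hi : i ∈ A) : m i ≤ N := single_le_sum (fun _ _ => Nat.zero_le _) hi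
  calc ∑ i ∈ A, ∑ j ∈ A, M i j * (min (m i) (m j) : ℕ)
      = ∑ i ∈ A, ∑ s ∈ range N, ∑ j ∈ A, if s < m i ∧ s < m j then M i j else 0 := by
        refine sum_congr rfl fun i hi => ?_
        rw [sum_comm]
        refine sum_congr rfl fun j _ => ?_
        rw [natCast_min_eq_sum (m_le i hi), mul_sum]
        simp only [mul_ite, mul_one, mul_zero]
    _ = ∑ s ∈ range N, ∑ i ∈ A with s < m i, ∑ j ∈ A with s < m j, M i j := by
        rw [sum_comm]
        refine sum_congr rfl fun s _ => ?_
        rw [sum_filter]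
        refine sum_congr rfl fun i _ => ?_
        by_cases hs : s < m i <;> simp [hs, sum_filter]
    _ ≤ ∑ s ∈ range N, K * #{i ∈ A | s < m i} := sum_le_sum fun s _ => h _ (filter_subset _ _)
    _ = K * ∑ i ∈ A, (m i : ℝ) := by
        rw [← mul_sum, sum_congr rfl fun i hi => natCast_eq_sum (m_le i hi), sum_comm]
        simp only [sum_boole]

lemma mul_le_of_lt_mul {x y T δ : ℝ} (hx : 0 ≤ x) (hy : 0 ≤ y) (hδ : 0 < δ) (h : T < x * y) :
    x * y ≤ δ * (x ^ 2 + y ^ 2) +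
      if T * δ ≤ x ^ 2 ∧ T * δ ≤ y ^ 2 then δ⁻¹ * min (x ^ 2) (y ^ 2) else 0 := by
  have rest_nonneg :
      0 ≤ if T * δ ≤ x ^ 2 ∧ T * δ ≤ y ^ 2 then δ⁻¹ * min (x ^ 2) (y ^ 2) else 0 := by
    positivity
  have := mul_nonneg hδ.le (sq_nonneg x)
  have := mul_nonneg hδ.le (sq_nonneg y)
  obtain hxy | hxy := le_total x (δ * y)
  · nlinarith
  obtain hyx | hyx := le_total y (δ * x)
  · nlinarith
  have le_x : δ * (x * y) ≤ x ^ 2 := by nlinarith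
  have le_y : δ * (x * y) ≤ y ^ 2 := by nlinarith
  have T_le : T * δ ≤ δ * (x * y) := by nlinarith
  rw [if_pos ⟨T_le.trans le_x, T_le.trans le_y⟩]
  have : x * y ≤ δ⁻¹ * min (x ^ 2) (y ^ 2) := (le_inv_mul_iff₀ hδ).2 (le_min le_x le_y)
  linarith

variable {n : ℕ}

/-- The light part of `F`: entries of absolute value larger than `T` are replaced by `0`. -/
noncomputable def lightPart (T : ℝ) (F : Matrix (Fin n) (Fin n) ℝ) : Matrix (Fin n) (Fin n) ℝ :=
  F.map fun x => if |x| ≤ T then x else 0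

/-- The absolute values of the entries of `F` that exceed `T` in absolute value; the other entries
are replaced by `0`. -/
noncomputable def absHeavyPart (T : ℝ) (F : Matrix (Fin n) (Fin n) ℝ) :
    Matrix (Fin n) (Fin n) ℝ :=
  F.map fun x => if |x| ≤ T then 0 else |x|

lemma dotProduct_mulVec_eq_sdpObj (M : Matrix (Fin n) (Fin n) ℝ) (y : Fin n → ℝ) :
    y ⬝ᵥ M *ᵥ y = sdpObj M (vecMulVec y y) := by
  simp only [sdpObj, dotProduct, mulVec, mul_sum, vecMulVec_apply]
  exact sum_congr rfl fun i _ => sum_congr rfl fun j _ => by ring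

lemma sdpObj_sub_le_lightPart_add {W M : Matrix (Fin n) (Fin n) ℝ} (hW : ∀ i j, 0 ≤ W i j)
    (hM : ∀ i j, 0 ≤ M i j) (T : ℝ) (F : Matrix (Fin n) (Fin n) ℝ) :
    sdpObj (W - M) F ≤ sdpObj (W - M) (lightPart T F)
      + sdpObj W (absHeavyPart T F) + sdpObj M (absHeavyPart T F) := by
  simp only [sdpObj, ← sum_add_distrib]
  refine sum_le_sum fun i _ => sum_le_sum fun j _ => ?_
  simp only [lightPart, absHeavyPart, map_apply, Matrix.sub_apply]
  split_ifs
  · simp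
  · have := mul_le_mul_of_nonneg_left (le_abs_self (F i j)) (hW i j)
    have := mul_le_mul_of_nonneg_left (neg_abs_le (F i j)) (hM i j)
    linarith

lemma sdpObj_absHeavyPart_le_of_entry_le {M : Matrix (Fin n) (Fin n) ℝ} {ρ T : ℝ} (hT : 0 < T)
    (hρ : 0 ≤ ρ) (hM : ∀ i j, M i j ≤ ρ) (y : Fin n → ℝ) :
    sdpObj M (absHeavyPart T (vecMulVec y y)) ≤ ρ * (y ⬝ᵥ y) ^ 2 / T := by
  have heavy_le (i j) : absHeavyPart T (vecMulVec y y) i j ≤ y i * y i * (y j * y j) / T := by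
    rw [absHeavyPart, map_apply, vecMulVec_apply]
    split_ifs with light
    · have := mul_self_nonneg (y i)
      have := mul_self_nonneg (y j)
      positivity
    · rw [le_div_iff₀ hT, mul_mul_mul_comm, ← abs_mul_abs_self (y i * y j)]
      exact mul_le_mul_of_nonneg_left (not_le.1 light).le (abs_nonneg _)
  have heavy_nonneg (i j) : 0 ≤ absHeavyPart T (vecMulVec y y) i j := by
    rw [absHeavyPart, map_apply]
    positivity
  calc sdpObj M (absHeavyPart T (vecMulVec y y))
      ≤ ∑ i, ∑ j, ρ * (y i * y i * (y j * y j) / T) :=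
        sum_le_sum fun i _ => sum_le_sum fun j _ =>
          mul_le_mul (hM i j) (heavy_le i j) (heavy_nonneg i j) hρ
    _ = ρ * (y ⬝ᵥ y) ^ 2 / T := by
        simp only [← mul_sum, ← sum_div, ← sum_mul, dotProduct]
        ring

lemma mul_absHeavyPart_vecMulVec_le {w : ℝ} (hw : 0 ≤ w) (T : ℝ) {δ : ℝ} (hδ : 0 < δ)
    (y : Fin n → ℝ) (i j : Fin n) :
    w * absHeavyPart T (vecMulVec y y) i j ≤ δ * (w * y i ^ 2) + δ * (w * y j ^ 2) +
      δ⁻¹ * (if T * δ ≤ y i ^ 2 ∧ T * δ ≤ y j ^ 2 then w * min (y i ^ 2) (y j ^ 2) else 0) := by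
  rw [absHeavyPart, map_apply, vecMulVec_apply]
  by_cases light : |y i * y j| ≤ T
  · rw [if_pos light, mul_zero]
    positivity
  have heavy := not_le.1 light
  rw [abs_mul] at heavy
  rw [if_neg light, abs_mul]
  refine (mul_le_mul_of_nonneg_left
    (mul_le_of_lt_mul (abs_nonneg _) (abs_nonneg _) hδ heavy) hw).trans_eq ?_
  simp only [sq_abs, mul_add, mul_ite, mul_zero]
  split_ifs <;> ring

lemma sdpObj_absHeavyPart_le_of_sparse {W : Matrix (Fin n) (Fin n) ℝ} (hW : ∀ i j, 0 ≤ W i j)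
    (hsymm : ∀ i j, W i j = W j i) (z : Fin n → ℤ) {R T δ D η : ℝ} (hT : 0 < T) (hδ : 0 < δ)
    (hD : 0 ≤ D) (hη : 0 ≤ η) (hz : ∑ i, (z i : ℝ) ^ 2 ≤ R) (hdeg : ∀ i, ∑ j, W i j ≤ D)
    (hsparse : ∀ A : Finset (Fin n), #A * (T * δ) ≤ R → ∑ i ∈ A, ∑ j ∈ A, W i j ≤ η * #A) :
    sdpObj W (absHeavyPart T (vecMulVec (fun i => (z i : ℝ)) fun i => (z i : ℝ))) ≤
      2 * δ * D * R + δ⁻¹ * η * R := by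
  set A : Finset (Fin n) := {i | T * δ ≤ (z i : ℝ) ^ 2}
  have sum_A_le : ∑ i ∈ A, (z i : ℝ) ^ 2 ≤ R :=
    (sum_le_univ_sum_of_nonneg fun i => sq_nonneg _).trans hz
  have card_A_le : #A * (T * δ) ≤ R := by
    rw [← nsmul_eq_mul]
    exact (card_nsmul_le_sum A _ _ fun i hi => (mem_filter.1 hi).2).trans sum_A_le
  have both_large : ∑ i ∈ A, ∑ j ∈ A, W i j * min ((z i : ℝ) ^ 2) ((z j : ℝ) ^ 2) ≤ η * R := by
    have layers := sum_mul_min_le_of_forall_subset W (fun i => (z i).natAbs ^ 2) (A := A) (K := η)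
      fun S hS => hsparse S <| card_A_le.trans' <| by gcongr
    simp only [Nat.cast_min, Nat.cast_pow, Nat.cast_natAbs, Int.cast_abs, sq_abs] at layers
    exact layers.trans (by gcongr)
  have row_bound : ∑ i, ∑ j, W i j * (z i : ℝ) ^ 2 ≤ D * R := by
    simp only [← sum_mul]
    calc ∑ i, (∑ j, W i j) * (z i : ℝ) ^ 2 ≤ ∑ i, D * (z i : ℝ) ^ 2 := by gcongr; exact hdeg _
      _ ≤ D * R := by rw [← mul_sum]; gcongr
  have col_bound : ∑ i, ∑ j, W i j * (z j : ℝ) ^ 2 ≤ D * R := by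
    rw [sum_comm]
    simpa only [hsymm] using row_bound
  refine (sum_le_sum fun i _ => sum_le_sum fun j _ =>
    mul_absHeavyPart_vecMulVec_le (hW i j) T hδ _ i j).trans ?_
  have mem_A (i) : T * δ ≤ (z i : ℝ) ^ 2 ↔ i ∈ A := by simp [A]
  simp only [mem_A]
  have sum_A : ∑ i, ∑ j, (if i ∈ A ∧ j ∈ A then W i j * min ((z i : ℝ) ^ 2) ((z j : ℝ) ^ 2) else 0)
      = ∑ i ∈ A, ∑ j ∈ A, W i j * min ((z i : ℝ) ^ 2) ((z j : ℝ) ^ 2) := by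
    simp [ite_and]
  simp only [sum_add_distrib, ← mul_sum, sum_A]
  have := mul_le_mul_of_nonneg_left row_bound hδ.le
  have := mul_le_mul_of_nonneg_left col_bound hδ.le
  have := mul_le_mul_of_nonneg_left both_large (inv_nonneg.2 hδ.le)
  linarith

end HeavyPairs

/-! ### Concentration of the adjacency matrix -/

section Net

lemma sum_Icc_half_pow_natAbs_le (N : ℕ) :
    ∑ z ∈ Icc (-(N : ℤ)) N, ((1 : ℝ) / 2) ^ z.natAbs ≤ 3 := by
  suffices h : ∑ z ∈ Icc (-(N : ℤ)) N, ((1 : ℝ) / 2) ^ z.natAbs = 3 - 2 * (1 / 2) ^ N by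
    rw [h]
    linarith [show (0 : ℝ) ≤ (1 / 2) ^ N by positivity]
  induction N with
  | zero => norm_num
  | succ N ih =>
    have Icc_eq : Icc (-((N + 1 : ℕ) : ℤ)) ((N + 1 : ℕ) : ℤ) =
        insert (-((N + 1 : ℕ) : ℤ)) (insert ((N + 1 : ℕ) : ℤ) (Icc (-(N : ℤ)) N)) := by
      ext z
      simp only [mem_Icc, mem_insert]
      omega
    rw [Icc_eq, sum_insert (by simp only [mem_insert, mem_Icc]; omega),
      sum_insert (by simp only [mem_Icc]; omega), ih, Int.natAbs_neg, Int.natAbs_natCast, pow_succ]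
    ring

variable (ι : Type*) [Fintype ι]

/-- The integer vectors of squared Euclidean norm at most `r`. -/
noncomputable def intBall (r : ℕ) : Finset (ι → ℤ) :=
  {z ∈ Fintype.piFinset fun _ => Icc (-(r : ℤ)) r | ∑ i, (z i : ℝ) ^ 2 ≤ r}

variable {ι}

lemma mem_intBall {r : ℕ} {z : ι → ℤ} : z ∈ intBall ι r ↔ ∑ i, (z i : ℝ) ^ 2 ≤ r := by
  refine mem_filter.trans (and_iff_right_of_imp fun hz => Fintype.mem_piFinset.2 fun i => ?_)
  have sq_le : (z i) ^ 2 ≤ (r : ℤ) := by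
    exact_mod_cast (single_le_sum (f := fun i => (z i : ℝ) ^ 2) (fun _ _ => sq_nonneg _)
      (mem_univ i)).trans hz
  rw [mem_Icc, ← abs_le]
  exact ((Int.le_self_sq _).trans_eq (sq_abs _)).trans sq_le

variable (ι) in
lemma card_intBall_le (r : ℕ) : (#(intBall ι r) : ℝ) ≤ 2 ^ r * 3 ^ Fintype.card ι := by
  have weight_ge_one (z) (hz : z ∈ intBall ι r) :
      (1 : ℝ) ≤ 2 ^ r * ∏ i, ((1 : ℝ) / 2) ^ (z i).natAbs := by
    have natAbs_sum_le : ∑ i, (z i).natAbs ≤ r := by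
      have : ((∑ i, (z i).natAbs : ℕ) : ℝ) ≤ r := by
        push_cast
        refine (sum_le_sum fun i _ => ?_).trans (mem_intBall.1 hz)
        rw [Nat.cast_natAbs, ← Int.cast_pow, Int.cast_le, ← sq_abs]
        exact Int.le_self_sq _
      exact_mod_cast this
    rw [prod_pow_eq_pow_sum]
    calc (1 : ℝ) = 2 ^ r * (1 / 2) ^ r := by rw [← mul_pow]; norm_num
      _ ≤ _ := by
        gcongr ?_ * ?_
        exact pow_le_pow_of_le_one (by norm_num) (by norm_num) natAbs_sum_le
  calc (#(intBall ι r) : ℝ)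
      ≤ ∑ z ∈ intBall ι r, 2 ^ r * ∏ i, ((1 : ℝ) / 2) ^ (z i).natAbs := by
        simpa using card_nsmul_le_sum _ _ _ weight_ge_one
    _ ≤ ∑ z ∈ Fintype.piFinset fun _ : ι => Icc (-(r : ℤ)) r,
          2 ^ r * ∏ i, ((1 : ℝ) / 2) ^ (z i).natAbs :=
        sum_le_sum_of_subset_of_nonneg (filter_subset _ _) fun z _ _ => by positivity
    _ = 2 ^ r * (∑ z ∈ Icc (-(r : ℤ)) r, ((1 : ℝ) / 2) ^ z.natAbs) ^ Fintype.card ι := by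
        rw [← mul_sum, ← prod_univ_sum (fun _ : ι => Icc (-(r : ℤ)) r)
          (fun _ z => ((1 : ℝ) / 2) ^ z.natAbs), prod_const, card_univ]
    _ ≤ 2 ^ r * 3 ^ Fintype.card ι := by
        gcongr
        exact sum_Icc_half_pow_natAbs_le r

lemma card_intBall_four_mul_le (n : ℕ) : (#(intBall (Fin n) (4 * n)) : ℝ) ≤ Real.exp (4 * n) := by
  have le_exp_four : (48 : ℝ) ≤ Real.exp 4 := by
    rw [show (4 : ℝ) = (4 : ℕ) * 1 by norm_num, Real.exp_nat_mul]
    calc (48 : ℝ) ≤ 2.7 ^ 4 := by norm_num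
      _ ≤ _ := by gcongr; linarith [Real.exp_one_gt_d9]
  calc (#(intBall (Fin n) (4 * n)) : ℝ) ≤ 2 ^ (4 * n) * 3 ^ n := by
        simpa using card_intBall_le (Fin n) (4 * n)
    _ = 48 ^ n := by rw [pow_mul, ← mul_pow]; norm_num
    _ ≤ Real.exp 4 ^ n := by gcongr
    _ = Real.exp (4 * n) := by rw [← Real.exp_nat_mul, mul_comm]

end Net

section UnionBounds

lemma measureReal_setOf_exists_mem_le {Ω κ : Type*} [MeasurableSpace Ω] (μ : Measure Ω)
    [IsFiniteMeasure μ] (s : Finset κ) (A : κ → Ω → Prop) :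
    μ.real {ω | ∃ a ∈ s, A a ω} ≤ ∑ a ∈ s, μ.real {ω | A a ω} := by
  have : {ω | ∃ a ∈ s, A a ω} = ⋃ a ∈ s, {ω | A a ω} := by ext; simp
  rw [this]
  exact measureReal_biUnion_finset_le s _

variable {n k : ℕ}

lemma sdpObj_updateRow_zero (W : Matrix (Fin n) (Fin n) ℝ) (i : Fin n) (f : Fin n → ℝ) :
    sdpObj W ((0 : Matrix (Fin n) (Fin n) ℝ).updateRow i f) = ∑ j, W i j * f j := by
  simp only [sdpObj, updateRow_apply, mul_ite, Matrix.zero_apply, mul_zero]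
  rw [sum_eq_single i (fun a _ ha => by simp [ha]) (by simp)]
  simp

lemma real_exists_le_rowSum_le (hn : n ≠ 0) {C : ℝ} {P : KSet n k → unitInterval}
    (hP : ∀ i j, meanAdj P i j ≤ C * Real.log n / n) :
    (bernoulliPi P).real
      {E | ∃ i, (C * Real.exp ((k : ℝ) ^ 2) + 2) * Real.log n ≤ ∑ j, Wmat E i j} ≤ (n : ℝ)⁻¹ := by
  have hn' : (0 : ℝ) < n := by positivity
  have row_bound (i) : (bernoulliPi P).real
      {E | (C * Real.exp ((k : ℝ) ^ 2) + 2) * Real.log n ≤ ∑ j, Wmat E i j} ≤ ((n : ℝ) ^ 2)⁻¹ := by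
    have row_nonneg (a j) : 0 ≤ (0 : Matrix (Fin n) (Fin n) ℝ).updateRow i 1 a j := by
      rw [updateRow_apply]; split_ifs <;> simp
    have row_le (a j) : (0 : Matrix (Fin n) (Fin n) ℝ).updateRow i 1 a j ≤ 1 := by
      rw [updateRow_apply]; split_ifs <;> simp
    have tail := bernoulliPi_real_le_sdpObj_of_nonneg P hP row_nonneg row_le one_pos
      ((C * Real.exp ((k : ℝ) ^ 2) + 2) * Real.log n)
    have row_sum : ∑ a, ∑ j, (0 : Matrix (Fin n) (Fin n) ℝ).updateRow i 1 a j = n := by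
      simp [updateRow_apply]
    simp only [sdpObj_updateRow_zero, Pi.one_apply, mul_one, row_sum] at tail
    refine tail.trans_eq ?_
    rw [← Real.exp_log (inv_pos.2 (pow_pos hn' 2)), Real.log_inv, Real.log_pow]
    congr 1
    field_simp
    push_cast
    ring
  have union := measureReal_setOf_exists_mem_le (bernoulliPi P) univ
    fun i E => (C * Real.exp ((k : ℝ) ^ 2) + 2) * Real.log n ≤ ∑ j, Wmat E i j
  simp only [mem_univ, true_and] at union
  refine union.trans ((sum_le_sum fun i _ => row_bound i).trans_eq ?_)
  rw [sum_const, card_univ, Fintype.card_fin, nsmul_eq_mul]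
  field_simp

lemma sum_pow_card_nonempty_le (ι : Type*) [Fintype ι] {x : ℝ} (hx : 0 ≤ x) :
    ∑ S : Finset ι with S.Nonempty, x ^ #S ≤ Real.exp (Fintype.card ι * x) - 1 := by
  have sum_all : ∑ S : Finset ι, x ^ #S = (x + 1) ^ Fintype.card ι := by
    simpa using sum_pow_mul_eq_add_pow x 1 (univ : Finset ι)
  have sum_empty : ∑ S : Finset ι with ¬ S.Nonempty, x ^ #S = 1 := by
    simp [not_nonempty_iff_eq_empty, filter_eq']
  rw [le_sub_iff_add_le, ← sum_empty, sum_filter_add_sum_filter_not, sum_all, Real.exp_nat_mul]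
  gcongr
  exact Real.add_one_le_exp x

lemma sdpObj_indicator (W : Matrix (Fin n) (Fin n) ℝ) (S : Finset (Fin n)) :
    sdpObj W (Matrix.of fun i j => if i ∈ S ∧ j ∈ S then 1 else 0) =
      ∑ i ∈ S, ∑ j ∈ S, W i j := by
  simp [sdpObj, ite_and]

lemma real_le_sum_sum_le (hn : 1 < n) {C A η : ℝ} (hC : 0 ≤ C) (hη : 0 < η)
    {P : KSet n k → unitInterval} (hP : ∀ i j, meanAdj P i j ≤ C * Real.log n / n)
    (hlarge : 4 / η * Real.exp (4 / η * (k : ℝ) ^ 2) * (C * A) ≤ Real.log n)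
    {S : Finset (Fin n)} (hS : #S * Real.log n ≤ A * n) :
    (bernoulliPi P).real {E | η * Real.log n * #S ≤ ∑ i ∈ S, ∑ j ∈ S, Wmat E i j} ≤
      ((n : ℝ) ^ 3)⁻¹ ^ #S := by
  have hn' : (0 : ℝ) < n := by positivity
  have tail := bernoulliPi_real_le_sdpObj_of_nonneg P hP
    (F := Matrix.of fun i j => if i ∈ S ∧ j ∈ S then 1 else 0)
    (fun i j => by rw [of_apply]; positivity)
    (fun i j => by rw [of_apply]; split_ifs <;> simp) (θ := 4 / η) (by positivity)
    (η * Real.log n * #S)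
  have sum_entries : ∑ i, ∑ j, (Matrix.of fun i j => if i ∈ S ∧ j ∈ S then (1 : ℝ) else 0) i j =
      #S * #S := by
    simp [ite_and]
  simp only [sdpObj_indicator, sum_entries] at tail
  refine tail.trans ?_
  rw [← Real.exp_log (inv_pos.2 (pow_pos hn' 3)), Real.log_inv, Real.log_pow, ← Real.exp_nat_mul]
  refine Real.exp_le_exp.2 ?_
  have mean_le : C * Real.log n / n * (#S * #S) ≤ C * A * #S := by
    rw [div_mul_eq_mul_div, div_le_iff₀ hn']
    nlinarith [mul_le_mul_of_nonneg_left hS (mul_nonneg hC (Nat.cast_nonneg' #S))]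
  calc 4 / η * Real.exp (4 / η * (k : ℝ) ^ 2) * (C * Real.log n / n * (#S * #S))
        - 4 / η * (η * Real.log n * #S)
      ≤ 4 / η * Real.exp (4 / η * (k : ℝ) ^ 2) * (C * A * #S) - 4 / η * (η * Real.log n * #S) := by
        gcongr
    _ = 4 / η * Real.exp (4 / η * (k : ℝ) ^ 2) * (C * A) * #S - 4 * Real.log n * #S := by
        field_simp
    _ ≤ Real.log n * #S - 4 * Real.log n * #S := by gcongr
    _ = #S * -((3 : ℕ) * Real.log n) := by push_cast; ring

lemma real_exists_le_sum_sum_le (hn : 1 < n) {C A η : ℝ} (hC : 0 ≤ C) (hη : 0 < η)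
    {P : KSet n k → unitInterval} (hP : ∀ i j, meanAdj P i j ≤ C * Real.log n / n)
    (hlarge : 4 / η * Real.exp (4 / η * (k : ℝ) ^ 2) * (C * A) ≤ Real.log n) :
    (bernoulliPi P).real {E | ∃ S : Finset (Fin n), S.Nonempty ∧ #S * Real.log n ≤ A * n ∧
      η * Real.log n * #S ≤ ∑ i ∈ S, ∑ j ∈ S, Wmat E i j} ≤ (n : ℝ)⁻¹ := by
  have hn' : (2 : ℝ) ≤ n := by exact_mod_cast hn
  have union := measureReal_setOf_exists_mem_le (bernoulliPi P)
    {S : Finset (Fin n) | S.Nonempty ∧ #S * Real.log n ≤ A * n}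
    fun S E => η * Real.log n * #S ≤ ∑ i ∈ S, ∑ j ∈ S, Wmat E i j
  simp only [mem_filter_univ, and_assoc] at union
  have sq_inv_le : ((n : ℝ) ^ 2)⁻¹ ≤ 1 := inv_le_one_of_one_le₀ (by nlinarith)
  calc (bernoulliPi P).real {E | ∃ S : Finset (Fin n), S.Nonempty ∧ #S * Real.log n ≤ A * n ∧
        η * Real.log n * #S ≤ ∑ i ∈ S, ∑ j ∈ S, Wmat E i j}
      ≤ ∑ S : Finset (Fin n) with S.Nonempty ∧ #S * Real.log n ≤ A * n, ((n : ℝ) ^ 3)⁻¹ ^ #S :=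
        union.trans <| sum_le_sum fun S hS =>
          real_le_sum_sum_le hn hC hη hP hlarge (mem_filter.1 hS).2.2
    _ ≤ ∑ S : Finset (Fin n) with S.Nonempty, ((n : ℝ) ^ 3)⁻¹ ^ #S :=
        sum_le_sum_of_subset_of_nonneg (monotone_filter_right _ fun _ _ h => h.1)
          fun _ _ _ => by positivity
    _ ≤ Real.exp ((n : ℝ) ^ 2)⁻¹ - 1 := by
        convert sum_pow_card_nonempty_le (Fin n) (x := ((n : ℝ) ^ 3)⁻¹) (by positivity) using 3
        rw [Fintype.card_fin]
        field_simp
    _ ≤ 2 * ((n : ℝ) ^ 2)⁻¹ := by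
        have := Real.abs_exp_sub_one_le (x := ((n : ℝ) ^ 2)⁻¹) (by rwa [abs_of_pos (by positivity)])
        rw [abs_of_pos (a := ((n : ℝ) ^ 2)⁻¹) (by positivity)] at this
        exact (le_abs_self _).trans this
    _ ≤ (n : ℝ)⁻¹ := by
        field_simp
        exact hn'

lemma sum_lightPart_vecMulVec_sq_le (T : ℝ) (y : Fin n → ℝ) :
    ∑ i, ∑ j, lightPart T (vecMulVec y y) i j ^ 2 ≤ (∑ i, y i ^ 2) ^ 2 := by
  rw [sq (∑ i, y i ^ 2), sum_mul_sum]
  refine sum_le_sum fun i _ => sum_le_sum fun j _ => ?_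
  rw [lightPart, map_apply, vecMulVec_apply, ← mul_pow]
  split_ifs
  · rfl
  · rw [zero_pow two_ne_zero]
    positivity

lemma real_le_sdpObj_lightPart_le (hn : 1 < n) {C K c : ℝ} (hC : 0 ≤ C) (hK : 0 < K)
    (hc : 0 < c) (hKc : K * ((k : ℝ) ^ 2 * c) ≤ 1)
    {P : KSet n k → unitInterval} (hP : ∀ i j, meanAdj P i j ≤ C * Real.log n / n)
    (hlarge : 16 * K ^ 2 * (k : ℝ) ^ 2 * C ≤ Real.log n) {y : Fin n → ℝ}
    (hy : ∑ i, y i ^ 2 ≤ 4 * n) :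
    (bernoulliPi P).real {E | 6 / K * Real.log n * n ≤
      sdpObj (Wmat E - meanAdj P) (lightPart (c * Real.log n) (vecMulVec y y))} ≤
      Real.exp (-(5 * n)) := by
  have : (0 : ℝ) < n := by positivity
  have hlog : 0 < Real.log n := Real.log_pos (by exact_mod_cast hn)
  have tail := bernoulliPi_real_le_sdpObj_sub_meanAdj P hP
    (F := lightPart (c * Real.log n) (vecMulVec y y)) (T := c * Real.log n) (by positivity)
    (fun i j => by
      rw [lightPart, map_apply]
      split_ifs with light
      exacts [light, abs_zero.trans_le (by positivity)])
    (θ := K / Real.log n) (by positivity) (hKc.trans_eq' (by field_simp))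
    (6 / K * Real.log n * n)
  refine tail.trans (Real.exp_le_exp.2 ?_)
  have sum_sq_le : ∑ i, ∑ j, lightPart (c * Real.log n) (vecMulVec y y) i j ^ 2 ≤ (4 * n) ^ 2 :=
    (sum_lightPart_vecMulVec_sq_le _ y).trans <|
      pow_le_pow_left₀ (sum_nonneg fun i _ => sq_nonneg _) hy 2
  calc (K / Real.log n) ^ 2 * (k : ℝ) ^ 2 * (C * Real.log n / n *
        ∑ i, ∑ j, lightPart (c * Real.log n) (vecMulVec y y) i j ^ 2)
        - K / Real.log n * (6 / K * Real.log n * n)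
      ≤ (K / Real.log n) ^ 2 * (k : ℝ) ^ 2 * (C * Real.log n / n * (4 * n) ^ 2)
        - K / Real.log n * (6 / K * Real.log n * n) := by gcongr
    _ = 16 * K ^ 2 * (k : ℝ) ^ 2 * C / Real.log n * n - 6 * n := by
        field_simp
        ring
    _ ≤ 1 * n - 6 * n := by
        gcongr
        exact (div_le_one hlog).2 hlarge
    _ = -(5 * n) := by ring

lemma real_exists_int_le_sdpObj_lightPart_le (hn : 1 < n) {C K c : ℝ} (hC : 0 ≤ C) (hK : 0 < K)
    (hc : 0 < c) (hKc : K * ((k : ℝ) ^ 2 * c) ≤ 1)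
    {P : KSet n k → unitInterval} (hP : ∀ i j, meanAdj P i j ≤ C * Real.log n / n)
    (hlarge : 16 * K ^ 2 * (k : ℝ) ^ 2 * C ≤ Real.log n) :
    (bernoulliPi P).real {E | ∃ z : Fin n → ℤ, ∑ i, (z i : ℝ) ^ 2 ≤ 4 * n ∧
      6 / K * Real.log n * n ≤ sdpObj (Wmat E - meanAdj P)
        (lightPart (c * Real.log n) (vecMulVec (fun i => (z i : ℝ)) fun i => (z i : ℝ)))} ≤
      (n : ℝ)⁻¹ := by
  have union := measureReal_setOf_exists_mem_le (bernoulliPi P) (intBall (Fin n) (4 * n))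
    fun z E => 6 / K * Real.log n * n ≤ sdpObj (Wmat E - meanAdj P)
      (lightPart (c * Real.log n) (vecMulVec (fun i => (z i : ℝ)) fun i => (z i : ℝ)))
  have mem_iff (z : Fin n → ℤ) : z ∈ intBall (Fin n) (4 * n) ↔ ∑ i, (z i : ℝ) ^ 2 ≤ 4 * n := by
    rw [mem_intBall, Nat.cast_mul, Nat.cast_ofNat]
  simp only [mem_iff] at union
  calc _ ≤ ∑ z ∈ intBall (Fin n) (4 * n), Real.exp (-(5 * n)) :=
        union.trans <| sum_le_sum fun z hz =>
          real_le_sdpObj_lightPart_le hn hC hK hc hKc hP hlarge ((mem_iff z).1 hz)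
    _ ≤ Real.exp (4 * n) * Real.exp (-(5 * n)) := by
        rw [sum_const, nsmul_eq_mul]
        gcongr
        exact card_intBall_four_mul_le n
    _ = (Real.exp n)⁻¹ := by
        rw [← Real.exp_add, ← Real.exp_neg]
        ring_nf
    _ ≤ (n : ℝ)⁻¹ := by
        gcongr
        linarith [Real.add_one_le_exp (n : ℝ)]

end UnionBounds

section SpectralBound

variable {n k : ℕ}

lemma dotProduct_sub_mulVec_le [NeZero n] {W M : Matrix (Fin n) (Fin n) ℝ}
    (hW : ∀ i j, 0 ≤ W i j) (hsymm : ∀ i j, W i j = W j i) (hWdiag : ∀ i, W i i = 0)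
    (hM : ∀ i j, 0 ≤ M i j) (hMdiag : ∀ i, M i i = 0) {T δ D η L ρ : ℝ} (hT : 0 < T)
    (hδ : 0 < δ) (hD : 0 ≤ D) (hη : 0 ≤ η) (hρ : 0 ≤ ρ) (hMρ : ∀ i j, M i j ≤ ρ)
    (hdeg : ∀ i, ∑ j, W i j ≤ D)
    (hsparse : ∀ A : Finset (Fin n), #A * (T * δ) ≤ 4 * n → ∑ i ∈ A, ∑ j ∈ A, W i j ≤ η * #A)
    (hlight : ∀ z : Fin n → ℤ, ∑ i, (z i : ℝ) ^ 2 ≤ 4 * n →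
      sdpObj (W - M) (lightPart T (vecMulVec (fun i => (z i : ℝ)) fun i => (z i : ℝ))) ≤ L * n)
    (y : Fin n → ℝ) :
    y ⬝ᵥ (W - M) *ᵥ y ≤ (L + 8 * δ * D + 4 * δ⁻¹ * η + 16 * ρ * n / T) * (y ⬝ᵥ y) := by
  refine dotProduct_mulVec_le_of_forall_int (fun i => by simp [hWdiag, hMdiag]) (fun z hz => ?_) y
  rw [Fintype.card_fin] at hz ⊢
  have sq_norm_le : (fun i => (z i : ℝ)) ⬝ᵥ (fun i => (z i : ℝ)) ≤ 4 * n := by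
    simpa only [dotProduct, ← sq] using hz
  have mean_heavy := sdpObj_absHeavyPart_le_of_entry_le hT hρ hMρ fun i => (z i : ℝ)
  have sample_heavy := sdpObj_absHeavyPart_le_of_sparse hW hsymm z hT hδ hD hη hz hdeg hsparse
  have split :=
    sdpObj_sub_le_lightPart_add hW hM T (vecMulVec (fun i => (z i : ℝ)) fun i => (z i : ℝ))
  rw [dotProduct_mulVec_eq_sdpObj]
  calc _ ≤ L * n + (2 * δ * D * (4 * n) + δ⁻¹ * η * (4 * n)) + ρ * (4 * n) ^ 2 / T := by
        have : ρ * ((fun i => (z i : ℝ)) ⬝ᵥ fun i => (z i : ℝ)) ^ 2 / T ≤ ρ * (4 * n) ^ 2 / T := by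
          gcongr
          exact sum_nonneg fun i _ => mul_self_nonneg _
        linarith [hlight z hz]
    _ = (L + 8 * δ * D + 4 * δ⁻¹ * η + 16 * ρ * n / T) * n := by ring

lemma real_exists_lt_dotProduct_mulVec_le {C δ η K c : ℝ} (hn : 1 < n) (hC : 0 ≤ C) (hδ : 0 < δ)
    (hη : 0 < η) (hK : 0 < K) (hc : 0 < c) (hKc : K * ((k : ℝ) ^ 2 * c) ≤ 1)
    (hsparse : 4 / η * Real.exp (4 / η * (k : ℝ) ^ 2) * (C * (4 / (c * δ))) ≤ Real.log n)
    (hlight : 16 * K ^ 2 * (k : ℝ) ^ 2 * C ≤ Real.log n) {P : KSet n k → unitInterval}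
    (hP : ∀ i j, meanAdj P i j ≤ C * Real.log n / n) :
    (bernoulliPi P).real {E | ∃ y : Fin n → ℝ,
      (6 / K * Real.log n + 8 * δ * ((C * Real.exp ((k : ℝ) ^ 2) + 2) * Real.log n) +
        4 * δ⁻¹ * (η * Real.log n) + 16 * C / c) * (y ⬝ᵥ y) < y ⬝ᵥ (Wmat E - meanAdj P) *ᵥ y} ≤
      3 * (n : ℝ)⁻¹ := by
  have : NeZero n := ⟨by omega⟩
  have hlog : 0 < Real.log n := Real.log_pos (by exact_mod_cast hn)
  have degree_bound := real_exists_le_rowSum_le (by omega) hP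
  have sparse_bound := real_exists_le_sum_sum_le hn hC hη hP hsparse
  have light_bound := real_exists_int_le_sdpObj_lightPart_le hn hC hK hc hKc hP hlight
  refine (measureReal_mono fun E => ?_).trans <| (measureReal_union_le _ _).trans <|
    (add_le_add ((measureReal_union_le _ _).trans (add_le_add degree_bound sparse_bound))
      light_bound).trans_eq (by ring)
  contrapose!
  simp only [Set.mem_union, Set.mem_ofPred_eq, not_or, not_exists, not_and, not_le, not_lt]
  rintro ⟨⟨degree_lt, sparse_lt⟩, light_lt⟩ y
  have sparse_le (A : Finset (Fin n)) (hA : #A * (c * Real.log n * δ) ≤ 4 * n) :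
      ∑ i ∈ A, ∑ j ∈ A, Wmat E i j ≤ η * Real.log n * #A := by
    obtain rfl | hA_nonempty := A.eq_empty_or_nonempty
    · simp
    refine (sparse_lt A hA_nonempty ?_).le
    rw [div_mul_eq_mul_div, le_div_iff₀ (by positivity)]
    linarith
  have mean_term : 16 * (C * Real.log n / n) * n / (c * Real.log n) = 16 * C / c := by
    have : (n : ℝ) ≠ 0 := NeZero.ne _
    field_simp
  rw [← mean_term]
  exact dotProduct_sub_mulVec_le (Wmat_nonneg E) (Wmat_symm E)
    (fun i => by rw [Wmat_eq_weightedAdj, weightedAdj_self]) (meanAdj_nonneg P)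
    (weightedAdj_self _) (by positivity) hδ (by positivity) (by positivity) (by positivity) hP
    (fun i => (degree_lt i).le) sparse_le (fun z hz => (light_lt z hz).le) y

lemma eventually_real_exists_lt_dotProduct_mulVec_le (k : ℕ) {C ε : ℝ} (hC : 0 ≤ C) (hε : 0 < ε) :
    ∀ᶠ n : ℕ in atTop, ∀ P : KSet n k → unitInterval,
      (∀ i j, meanAdj P i j ≤ C * Real.log n / n) →
      (bernoulliPi P).real {E | ∃ y : Fin n → ℝ,
        ε * Real.log n * (y ⬝ᵥ y) < y ⬝ᵥ (Wmat E - meanAdj P) *ᵥ y} ≤ 3 * (n : ℝ)⁻¹ := by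
  -- The constants make each of the four error terms at most `ε / 4 * log n`.
  set δ := ε / 32 / (C * Real.exp ((k : ℝ) ^ 2) + 2) with δ_def
  set η := ε * δ / 16 with η_def
  set K := 24 / ε with K_def
  set c := (K * (k : ℝ) ^ 2 + 1)⁻¹ with c_def
  have hδ : 0 < δ := by positivity
  have hKc : K * ((k : ℝ) ^ 2 * c) ≤ 1 := by
    rw [← mul_assoc, c_def, ← div_eq_mul_inv, div_le_one (by positivity)]
    linarith
  have log_tendsto : Tendsto (fun n : ℕ => Real.log n) atTop atTop :=
    Real.tendsto_log_atTop.comp tendsto_natCast_atTop_atTop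
  filter_upwards [eventually_gt_atTop 1, log_tendsto.eventually_ge_atTop _,
    log_tendsto.eventually_ge_atTop _, log_tendsto.eventually_ge_atTop (16 * C / c / (ε / 4))]
    with n hn hsparse hlight hmean P hP
  refine (measureReal_mono fun E => Exists.imp fun y => lt_of_le_of_lt ?_).trans <|
    real_exists_lt_dotProduct_mulVec_le hn hC hδ (η := η) (K := K) (c := c) (by positivity)
      (by positivity) (by positivity) hKc hsparse hlight hP
  refine mul_le_mul_of_nonneg_right ?_ (sum_nonneg fun i _ => mul_self_nonneg (y i))
  have light_term : 6 / K = ε / 4 := by rw [K_def]; field_simp; norm_num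
  have degree_term : 8 * δ * (C * Real.exp ((k : ℝ) ^ 2) + 2) = ε / 4 := by
    rw [δ_def]; field_simp; norm_num
  have sparse_term : 4 * δ⁻¹ * η = ε / 4 := by rw [η_def]; field_simp; norm_num
  rw [div_le_iff₀' (by positivity)] at hmean
  rw [← mul_assoc, ← mul_assoc, light_term, degree_term, sparse_term]
  linarith

end SpectralBound

/-! ### The dual certificate -/

section DualCertificate

variable {n : ℕ}

lemma sgn_mul_sgn (σ : Fin n → Bool) (i j : Fin n) :
    sgn σ i * sgn σ j = if σ i = σ j then 1 else -1 := by
  unfold sgn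
  cases σ i <;> cases σ j <;> simp

lemma sgn_mul_self (σ : Fin n → Bool) (i : Fin n) : sgn σ i * sgn σ i = 1 := by
  rw [sgn_mul_sgn, if_pos rfl]

lemma sum_sgn_of_balanced {σ : Fin n → Bool} (hσ : balanced σ) : ∑ i, sgn σ i = 0 := by
  have sgn_eq (i) : sgn σ i = 2 * (if σ i = true then 1 else 0) - 1 := by
    unfold sgn
    split_ifs <;> norm_num
  simp_rw [sgn_eq, sum_sub_distrib, ← mul_sum, sum_boole, sum_const, card_univ, Fintype.card_fin,
    nsmul_eq_mul, mul_one, sub_eq_zero]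
  exact_mod_cast hσ

lemma sdpFeasible_outer {σ : Fin n → Bool} (hσ : balanced σ) : sdpFeasible (outer σ) := by
  refine ⟨?_, sgn_mul_self σ, ?_⟩
  · convert posSemidef_vecMulVec_self_star (sgn σ) using 1
    ext
    simp [outer, vecMulVec]
  · simp only [outer, of_apply, ← sum_mul_sum, sum_sgn_of_balanced hσ, zero_mul]

/-- The degree of `i` in `W` with the sign of each entry given by the agreement of the labels, i.e.
the row sums of `GammaM σ W`. -/
noncomputable def signedDegree (σ : Fin n → Bool) (W : Matrix (Fin n) (Fin n) ℝ) (i : Fin n) : ℝ :=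
  ∑ j, W i j * (sgn σ i * sgn σ j)

/-- The slack matrix of the dual solution of the semidefinite program attached to `σ`. It is
conjugate to `LGamma σ W` by the diagonal matrix with entries `sgn σ`. -/
noncomputable def dualSlack (σ : Fin n → Bool) (W : Matrix (Fin n) (Fin n) ℝ) :
    Matrix (Fin n) (Fin n) ℝ :=
  diagonal (signedDegree σ W) - W

lemma dualSlack_mulVec_sgn (σ : Fin n → Bool) (W : Matrix (Fin n) (Fin n) ℝ) :
    dualSlack σ W *ᵥ sgn σ = 0 := by
  ext i
  rw [dualSlack, sub_mulVec, Pi.sub_apply, mulVec_diagonal, signedDegree, sum_mul, Pi.zero_apply,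
    mulVec, dotProduct, ← sum_sub_distrib]
  refine sum_eq_zero fun j _ => ?_
  linear_combination W i j * sgn σ j * sgn_mul_self σ i

lemma sdpObj_dualSlack (σ : Fin n → Bool) (W : Matrix (Fin n) (Fin n) ℝ)
    {X : Matrix (Fin n) (Fin n) ℝ} (hX : ∀ i, X i i = 1) :
    sdpObj (dualSlack σ W) X = sdpObj W (outer σ) - sdpObj W X := by
  rw [dualSlack, sdpObj_sub_left]
  simp [sdpObj, diagonal_apply, hX, signedDegree, outer]

lemma sdpObj_conjTranspose_mul_self (M B : Matrix (Fin n) (Fin n) ℝ) :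
    sdpObj M (Bᴴ * B) = ∑ r, B r ⬝ᵥ M *ᵥ B r := by
  simp only [dotProduct_mulVec_eq_sdpObj, sdpObj, vecMulVec_apply, mul_apply, conjTranspose_apply,
    star_trivial, mul_sum]
  rw [sum_comm (s := univ (α := Fin n)) (f := fun r i => ∑ j, M i j * (B r i * B r j))]
  exact sum_congr rfl fun i _ => sum_comm

lemma sum_row_eq_zero_of_sum_conjTranspose_mul_self {B : Matrix (Fin n) (Fin n) ℝ}
    (h : ∑ i, ∑ j, (Bᴴ * B) i j = 0) (r : Fin n) : ∑ i, B r i = 0 := by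
  have sum_sq : ∑ r, (∑ i, B r i) ^ 2 = 0 := by
    rw [← h]
    simp only [mul_apply, conjTranspose_apply, star_trivial, sq, sum_mul_sum]
    rw [sum_comm]
    exact sum_congr rfl fun i _ => sum_comm
  exact pow_eq_zero_iff two_ne_zero |>.1 <|
    (sum_eq_zero_iff_of_nonneg fun r _ => sq_nonneg (∑ i, B r i)).1 sum_sq r (mem_univ r)

variable {σ : Fin n → Bool} {W : Matrix (Fin n) (Fin n) ℝ}

lemma le_dotProduct_dualSlack_mulVec {ε₁ ε₂ : ℝ} (hdeg : ∀ i, ε₁ ≤ signedDegree σ W i)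
    {w : Fin n → ℝ} (hw : w ⬝ᵥ W *ᵥ w ≤ ε₂ * (w ⬝ᵥ w)) :
    (ε₁ - ε₂) * (w ⬝ᵥ w) ≤ w ⬝ᵥ dualSlack σ W *ᵥ w := by
  have diagonal_part : ε₁ * (w ⬝ᵥ w) ≤ w ⬝ᵥ diagonal (signedDegree σ W) *ᵥ w := by
    simp only [dotProduct, mulVec_diagonal, mul_sum]
    refine sum_le_sum fun i _ => ?_
    nlinarith [mul_le_mul_of_nonneg_right (hdeg i) (mul_self_nonneg (w i))]
  rw [dualSlack, sub_mulVec, dotProduct_sub]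
  linarith

lemma sgn_dotProduct_sgn (σ : Fin n → Bool) : sgn σ ⬝ᵥ sgn σ = n := by
  simp [dotProduct, sgn_mul_self]

-- Subtracting from `b` its component along `sgn σ` does not change the form, since `sgn σ` lies in
-- the kernel of the slack matrix.
lemma exists_eq_add_smul_sgn (hσ : balanced σ) (hW : W.IsSymm) {b : Fin n → ℝ}
    (hb : ∑ i, b i = 0) : ∃ (w : Fin n → ℝ) (c : ℝ), b = w + c • sgn σ ∧ ∑ i, w i = 0 ∧
      sgn σ ⬝ᵥ w = 0 ∧ b ⬝ᵥ dualSlack σ W *ᵥ b = w ⬝ᵥ dualSlack σ W *ᵥ w := by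
  have slack_symm : (dualSlack σ W).IsSymm := (isSymm_diagonal _).sub hW
  have sgn_vecMul : sgn σ ᵥ* dualSlack σ W = 0 := by
    rw [← mulVec_transpose, slack_symm, dualSlack_mulVec_sgn]
  set c := sgn σ ⬝ᵥ b / n
  refine ⟨b - c • sgn σ, c, (sub_add_cancel _ _).symm, ?_, ?_, ?_⟩
  · simp [sum_sub_distrib, ← mul_sum, hb, sum_sgn_of_balanced hσ]
  · obtain rfl | hn := eq_or_ne n 0
    · simp [dotProduct]
    rw [dotProduct_sub, dotProduct_smul, sgn_dotProduct_sgn, smul_eq_mul,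
      div_mul_cancel₀ _ (by exact_mod_cast hn), sub_self]
  · rw [mulVec_sub, mulVec_smul, dualSlack_mulVec_sgn, smul_zero, sub_zero, sub_dotProduct,
      smul_dotProduct, dotProduct_mulVec (sgn σ), sgn_vecMul, zero_dotProduct, smul_zero, sub_zero]

open scoped MatrixOrder in
lemma sdpUniqueOpt_outer (hσ : balanced σ) (hW : W.IsSymm) {ε₁ ε₂ : ℝ} (hε : ε₂ < ε₁)
    (hdeg : ∀ i, ε₁ ≤ signedDegree σ W i)
    (hform : ∀ w : Fin n → ℝ, ∑ i, w i = 0 → sgn σ ⬝ᵥ w = 0 → w ⬝ᵥ W *ᵥ w ≤ ε₂ * (w ⬝ᵥ w)) :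
    sdpUniqueOpt W (outer σ) := by
  refine ⟨sdpFeasible_outer hσ, fun X ⟨hX, hdiag, hsum⟩ hne => ?_⟩
  obtain ⟨B, rfl⟩ := CStarAlgebra.nonneg_iff_eq_star_mul_self.1 hX.nonneg
  rw [star_eq_conjTranspose] at *
  choose w c hB hw_sum hw_sgn hw_slack using fun r => exists_eq_add_smul_sgn hσ hW
    (sum_row_eq_zero_of_sum_conjTranspose_mul_self hsum r)
  have row_bound (r) : (ε₁ - ε₂) * (w r ⬝ᵥ w r) ≤ B r ⬝ᵥ dualSlack σ W *ᵥ B r :=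
    (le_dotProduct_dualSlack_mulVec hdeg (hform _ (hw_sum r) (hw_sgn r))).trans_eq
      (hw_slack r).symm
  have w_nonneg (r) : 0 ≤ w r ⬝ᵥ w r := sum_nonneg fun i _ => mul_self_nonneg _
  rw [← sub_pos, ← sdpObj_dualSlack σ W hdiag, sdpObj_conjTranspose_mul_self]
  by_contra! hle
  have w_eq_zero (r) : w r = 0 := by
    have slack_nonneg (r) : 0 ≤ B r ⬝ᵥ dualSlack σ W *ᵥ B r :=
      (mul_nonneg (sub_pos.2 hε).le (w_nonneg r)).trans (row_bound r)
    have := (single_le_sum (fun r _ => slack_nonneg r) (mem_univ r)).trans hle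
    rw [← dotProduct_self_eq_zero]
    nlinarith [row_bound r, w_nonneg r]
  have gram_eq (i j) : (Bᴴ * B) i j = (∑ r, c r ^ 2) * (sgn σ i * sgn σ j) := by
    simp only [mul_apply, conjTranspose_apply, star_trivial, sum_mul]
    refine sum_congr rfl fun r _ => ?_
    simp only [hB r, w_eq_zero, zero_add, Pi.smul_apply, smul_eq_mul]
    ring
  refine hne (ext fun i j => ?_)
  have diag_eq := gram_eq i i
  rw [hdiag, sgn_mul_self, mul_one] at diag_eq
  rw [gram_eq, ← diag_eq, one_mul, outer, of_apply]

end DualCertificate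

/-! ### Counting hyperedges -/

lemma factorial_mul_esymm_le_sum_pow {R : Type*} [CommSemiring R] [PartialOrder R]
    [IsOrderedRing R] {s : Multiset R} (hs : ∀ a ∈ s, 0 ≤ a) (r : ℕ) :
    r.factorial * s.esymm r ≤ s.sum ^ r := by
  induction s using Multiset.induction generalizing r with
  | empty => cases r <;> simp [Multiset.esymm, Multiset.powersetCard_zero_right]
  | cons a s ih =>
    have ha : 0 ≤ a := hs a (Multiset.mem_cons_self a s)
    replace hs : ∀ b ∈ s, 0 ≤ b := fun b hb => hs b (Multiset.mem_cons_of_mem hb)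
    have sum_nonneg : 0 ≤ s.sum := Multiset.sum_nonneg hs
    cases r with
    | zero => simp [Multiset.esymm]
    | succ r =>
      have esymm_cons : (a ::ₘ s).esymm (r + 1) = s.esymm (r + 1) + a * s.esymm r := by
        simp [Multiset.esymm, Multiset.powersetCard_cons, Multiset.sum_map_mul_left]
      calc ((r + 1).factorial : R) * (a ::ₘ s).esymm (r + 1)
          = (r + 1).factorial * s.esymm (r + 1)
            + (r + 1 : ℕ) * (r.factorial * s.esymm r) * a := by
            rw [esymm_cons, Nat.factorial_succ]
            push_cast
            ring
        _ ≤ s.sum ^ (r + 1) + (r + 1 : ℕ) * s.sum ^ r * a := by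
            gcongr
            exacts [ih hs _, ih hs _]
        _ ≤ (s.sum + a) ^ (r + 1) :=
            pow_add_mul_le_add_pow_of_sq_nonneg sum_nonneg (by positivity) (by positivity)
              (add_nonneg (mul_nonneg zero_le_two sum_nonneg) ha) (r + 1)
        _ = (a ::ₘ s).sum ^ (r + 1) := by rw [Multiset.sum_cons, add_comm]

section Counting

variable {n k : ℕ}

lemma sum_kSet_eq_sum_powersetCard {M : Type*} [AddCommMonoid M] {s U : Finset (Fin n)}
    (hsU : s ⊆ U) (hs : #s ≤ k) (g : Finset (Fin n) → M) :
    ∑ e : KSet n k with s ⊆ e.1 ∧ e.1 ⊆ U, g e.1 =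
      ∑ A ∈ powersetCard (k - #s) (U \ s), g (A ∪ s) := by
  have disj {A} (hA : A ∈ powersetCard (k - #s) (U \ s)) : Disjoint A s :=
    disjoint_of_subset_left (mem_powersetCard.1 hA).1 sdiff_disjoint
  refine sum_bij' (fun e _ => e.1 \ s) (fun A hA => ⟨A ∪ s, ?_⟩) (fun e he => ?_) (fun A hA => ?_)
    (fun e he => Subtype.ext ?_) (fun A hA => ?_) fun e he => ?_
  · rw [card_union_of_disjoint (disj hA), (mem_powersetCard.1 hA).2]
    omega
  · obtain ⟨hse, heU⟩ := (mem_filter_univ _).1 he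
    exact mem_powersetCard.2 ⟨sdiff_subset_sdiff heU subset_rfl,
      by rw [card_sdiff_of_subset hse, e.2]⟩
  · exact (mem_filter_univ _).2
      ⟨subset_union_right, union_subset ((mem_powersetCard.1 hA).1.trans sdiff_subset) hsU⟩
  · exact sdiff_union_of_subset ((mem_filter_univ _).1 he).1
  · exact union_sdiff_cancel_right (disj hA)
  · rw [sdiff_union_of_subset ((mem_filter_univ _).1 he).1]

/-- The set of vertices with the same label as `i`. -/
def cluster (σ : Fin n → Bool) (i : Fin n) : Finset (Fin n) := {j | σ j = σ i}

lemma mem_cluster {σ : Fin n → Bool} {i j : Fin n} : j ∈ cluster σ i ↔ σ j = σ i :=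
  mem_filter_univ j

lemma card_cluster {σ : Fin n → Bool} (hσ : balanced σ) (i : Fin n) : #(cluster σ i) = n / 2 := by
  have split := card_filter_add_card_filter_not (s := (univ : Finset (Fin n))) (σ · = true)
  rw [card_univ, Fintype.card_fin] at split
  simp only [Bool.not_eq_true] at split
  unfold balanced at hσ
  cases hi : σ i <;> simp only [cluster, hi] <;> omega

lemma inCluster_iff_subset_cluster {σ : Fin n → Bool} {e : Finset (Fin n)} {i : Fin n}
    (hi : i ∈ e) : inCluster σ e ↔ e ⊆ cluster σ i :=
  ⟨fun h _ hj => mem_cluster.2 (h _ hj _ hi),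
    fun h _ ha _ hb => (mem_cluster.1 (h ha)).trans (mem_cluster.1 (h hb)).symm⟩

lemma sum_edgeP_mul (p q : ℝ) (σ : Fin n → Bool) {s : Finset (Fin n)} (hs : #s ≤ k) {i : Fin n}
    (hi : i ∈ s) (g : Finset (Fin n) → ℝ) :
    ∑ e : KSet n k with s ⊆ e.1, edgeP p q σ e.1 * g e.1 =
      q * ∑ A ∈ powersetCard (k - #s) (univ \ s), g (A ∪ s) +
        (p - q) * if s ⊆ cluster σ i then
          ∑ A ∈ powersetCard (k - #s) (cluster σ i \ s), g (A ∪ s) else 0 := by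
  have sum_cluster : ∑ e : KSet n k with s ⊆ e.1, (if e.1 ⊆ cluster σ i then g e.1 else 0) =
      if s ⊆ cluster σ i then ∑ A ∈ powersetCard (k - #s) (cluster σ i \ s), g (A ∪ s) else 0 := by
    rw [← sum_filter, filter_filter]
    split_ifs with hsi
    · exact sum_kSet_eq_sum_powersetCard hsi hs g
    · exact sum_eq_zero fun e he =>
        absurd ((mem_filter_univ _).1 he) fun h => hsi (h.1.trans h.2)
  rw [← sum_cluster, ← sum_kSet_eq_sum_powersetCard (subset_univ s) hs g, mul_sum, mul_sum]
  simp only [subset_univ, and_true]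
  rw [← sum_add_distrib]
  refine sum_congr rfl fun e he => ?_
  simp only [edgeP, inCluster_iff_subset_cluster ((mem_filter_univ _).1 he hi)]
  split_ifs <;> ring

/-- The edge probabilities of the block model with labels `σ`: `edgeP p q σ` bundled with the proof
that its values are probabilities. -/
noncomputable def edgeProb (p q : unitInterval) (σ : Fin n → Bool) (e : KSet n k) : unitInterval :=
  if inCluster σ e.1 then p else q

lemma coe_edgeProb (p q : unitInterval) (σ : Fin n → Bool) (e : KSet n k) :
    (edgeProb p q σ e : ℝ) = edgeP p q σ e.1 :=
  apply_ite _ _ _ _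

lemma meanAdj_edgeProb_of_ne (hk : 2 ≤ k) (p q : unitInterval) (σ : Fin n → Bool) {i j : Fin n}
    (hij : i ≠ j) :
    meanAdj (k := k) (edgeProb p q σ) i j = q * (n - 2).choose (k - 2) +
      if σ i = σ j then (p - q : ℝ) * (#(cluster σ i) - 2).choose (k - 2) else 0 := by
  have pair_subset : ({i, j} : Finset (Fin n)) ⊆ cluster σ i ↔ σ i = σ j := by
    simp [insert_subset_iff, mem_cluster, eq_comm]
  have := sum_edgeP_mul (k := k) p q σ (card_pair hij ▸ hk) (mem_insert_self i {j}) 1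
  simp only [insert_subset_iff, singleton_subset_iff, Pi.one_apply, mul_one] at this
  simp only [meanAdj, weightedAdj, of_apply, if_neg hij, coe_edgeProb]
  rw [this]
  simp only [← singleton_subset_iff (a := j), ← insert_subset_iff, pair_subset]
  simp only [sum_const, nsmul_eq_mul, mul_one, card_powersetCard, card_pair hij,
    card_sdiff_of_subset (subset_univ _), card_univ, Fintype.card_fin]
  split_ifs with h
  · rw [card_sdiff_of_subset (pair_subset.2 h), card_pair hij]
  · rw [mul_zero]

lemma meanAdj_edgeProb_le (hk : 2 ≤ k) {p q : unitInterval} (hqp : q ≤ p) (σ : Fin n → Bool)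
    (i j : Fin n) : meanAdj (k := k) (edgeProb p q σ) i j ≤ p * (n - 2).choose (k - 2) := by
  by_cases hij : i = j
  · rw [hij, meanAdj, weightedAdj_self]
    exact mul_nonneg p.2.1 (Nat.cast_nonneg _)
  have sub_nonneg : (0 : ℝ) ≤ p - q := sub_nonneg.2 hqp
  have choose_le : ((#(cluster σ i) - 2).choose (k - 2) : ℝ) ≤ (n - 2).choose (k - 2) := by
    exact_mod_cast Nat.choose_le_choose _ (Nat.sub_le_sub_right (card_finset_fin_le _) 2)
  calc meanAdj (k := k) (edgeProb p q σ) i j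
      ≤ q * (n - 2).choose (k - 2) + (p - q) * (n - 2).choose (k - 2) := by
        rw [meanAdj_edgeProb_of_ne hk p q σ hij]
        gcongr
        split_ifs
        exacts [mul_le_mul_of_nonneg_left choose_le sub_nonneg, by positivity]
    _ = p * (n - 2).choose (k - 2) := by ring

lemma meanAdj_edgeProb_of_balanced (hk : 2 ≤ k) (p q : unitInterval) {σ : Fin n → Bool}
    (hσ : balanced σ) {a b : ℝ} (ha : a = (p - q : ℝ) * (n / 2 - 2).choose (k - 2))
    (hb : b = q * (n - 2).choose (k - 2)) :
    meanAdj (k := k) (edgeProb p q σ) =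
      (b + a / 2) • vecMulVec 1 1 + (a / 2) • vecMulVec (sgn σ) (sgn σ) - (a + b) • 1 := by
  ext i j
  by_cases hij : i = j
  · subst hij
    simp only [meanAdj, weightedAdj_self, Matrix.sub_apply, Matrix.add_apply, Matrix.smul_apply,
      vecMulVec_apply, Pi.one_apply, sgn_mul_self, one_apply_eq, smul_eq_mul]
    ring
  · rw [meanAdj_edgeProb_of_ne hk p q σ hij, card_cluster hσ, ← ha, ← hb]
    simp only [Matrix.sub_apply, Matrix.add_apply, Matrix.smul_apply, vecMulVec_apply,
      Pi.one_apply, one_apply_ne hij, smul_eq_mul, sgn_mul_sgn]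
    split_ifs <;> ring

lemma dotProduct_meanAdj_edgeProb_mulVec_nonpos (hk : 2 ≤ k) {p q : unitInterval} (hqp : q ≤ p)
    {σ : Fin n → Bool} (hσ : balanced σ) {w : Fin n → ℝ} (hw : ∑ i, w i = 0)
    (hσw : sgn σ ⬝ᵥ w = 0) : w ⬝ᵥ meanAdj (k := k) (edgeProb p q σ) *ᵥ w ≤ 0 := by
  have sub_nonneg : (0 : ℝ) ≤ p - q := sub_nonneg.2 hqp
  have q_nonneg := q.2.1
  rw [meanAdj_edgeProb_of_balanced hk p q hσ rfl rfl]
  simp only [sub_mulVec, add_mulVec, smul_mulVec, vecMulVec_mulVec, one_mulVec, one_dotProduct, hw,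
    hσw, MulOpposite.op_zero, zero_smul, smul_zero, zero_add, zero_sub, dotProduct_neg,
    dotProduct_smul, smul_eq_mul, neg_nonpos]
  exact mul_nonneg (by positivity) (sum_nonneg fun i _ => mul_self_nonneg _)

lemma pairSum_updateRow_zero (i : Fin n) (f : Fin n → ℝ) (e : Finset (Fin n)) :
    pairSum ((0 : Matrix _ _ ℝ).updateRow i f) e = if i ∈ e then ∑ j ∈ e \ {i}, f j else 0 := by
  have apply_eq (x : Fin n × Fin n) :
      (0 : Matrix _ _ ℝ).updateRow i f x.1 x.2 = if x.1 = i then f x.2 else 0 := by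
    simp [updateRow_apply]
  simp_rw [pairSum, apply_eq, ← sum_filter]
  split_ifs with hi
  · refine sum_bij' (fun x _ => x.2) (fun j _ => (i, j)) ?_ ?_ ?_ ?_ ?_ <;>
      simp +contextual [hi, eq_comm]
  · refine sum_eq_zero fun x hx => ?_
    obtain ⟨hxe, hxi⟩ := mem_filter.1 hx
    exact absurd (hxi ▸ (mem_offDiag.1 hxe).1) hi

lemma sum_exp_mul_sgn {σ : Fin n → Bool} (hσ : balanced σ) (i : Fin n) (θ : ℝ) :
    ∑ j, Real.exp (-(θ * (sgn σ i * sgn σ j))) = n * Real.cosh θ := by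
  have exp_eq (j) : Real.exp (-(θ * (sgn σ i * sgn σ j))) =
      Real.cosh θ - Real.sinh θ * sgn σ i * sgn σ j := by
    unfold sgn
    cases σ i <;> cases σ j <;> simp [← Real.cosh_add_sinh, sub_eq_add_neg]
  simp only [exp_eq, sum_sub_distrib, ← mul_sum, sum_sgn_of_balanced hσ, sum_const, card_univ,
    Fintype.card_fin, nsmul_eq_mul, mul_zero, sub_zero]

lemma sum_powersetCard_prod_exp_le {σ : Fin n → Bool} (hσ : balanced σ) (i : Fin n) (θ : ℝ)
    (s : Finset (Fin n)) (r : ℕ) :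
    ∑ A ∈ powersetCard r s, ∏ j ∈ A, Real.exp (-(θ * (sgn σ i * sgn σ j))) ≤
      (n * Real.cosh θ) ^ r / r.factorial := by
  have esymm_le := factorial_mul_esymm_le_sum_pow
    (s := s.val.map fun j => Real.exp (-(θ * (sgn σ i * sgn σ j)))) (by simp [Real.exp_nonneg]) r
  rw [esymm_map_val] at esymm_le
  rw [le_div_iff₀' (by positivity), ← sum_exp_mul_sgn hσ i θ]
  refine esymm_le.trans (pow_le_pow_left₀ (sum_nonneg fun j _ => Real.exp_nonneg _) ?_ r)
  exact sum_le_sum_of_subset_of_nonneg (subset_univ s) fun j _ _ => Real.exp_nonneg _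

lemma prod_exp_mul_sgn_of_subset_cluster {σ : Fin n → Bool} {i : Fin n} {A : Finset (Fin n)}
    (hA : A ⊆ cluster σ i) (θ : ℝ) :
    ∏ j ∈ A, Real.exp (-(θ * (sgn σ i * sgn σ j))) = Real.exp (-θ) ^ #A := by
  refine prod_eq_pow_card fun j hj => ?_
  have sgn_eq : sgn σ j = sgn σ i := by simp only [sgn, mem_cluster.1 (hA hj)]
  rw [sgn_eq, sgn_mul_self, mul_one]

lemma sum_edgeProb_mul_exp_sub_one_eq (p q : unitInterval) (σ : Fin n → Bool) (i : Fin n)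
    (θ : ℝ) :
    ∑ e : KSet n k, edgeProb p q σ e * (Real.exp (θ * pairSum
        ((0 : Matrix _ _ ℝ).updateRow i fun j => -(sgn σ i * sgn σ j)) e.1) - 1) =
      ∑ e : KSet n k with {i} ⊆ e.1, edgeP p q σ e.1 *
        (∏ j ∈ e.1 \ {i}, Real.exp (-(θ * (sgn σ i * sgn σ j))) - 1) := by
  rw [sum_filter]
  refine sum_congr rfl fun e _ => ?_
  simp only [pairSum_updateRow_zero, coe_edgeProb, singleton_subset_iff]
  split_ifs
  · simp [← Real.exp_sum, mul_sum]
  · simp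

lemma sum_edgeProb_mul_exp_sub_one_le (hk : 1 ≤ k) (p q : unitInterval) {σ : Fin n → Bool}
    (hσ : balanced σ) (i : Fin n) (θ : ℝ) :
    ∑ e : KSet n k, edgeProb p q σ e * (Real.exp (θ * pairSum
        ((0 : Matrix _ _ ℝ).updateRow i fun j => -(sgn σ i * sgn σ j)) e.1) - 1) ≤
      q * ((n * Real.cosh θ) ^ (k - 1) / (k - 1).factorial - (n - 1).choose (k - 1)) +
        (p - q) * ((n / 2 - 1).choose (k - 1) * (Real.exp (-θ) ^ (k - 1) - 1)) := by
  set y : Fin n → ℝ := fun j => Real.exp (-(θ * (sgn σ i * sgn σ j)))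
  have hi : {i} ⊆ cluster σ i := singleton_subset_iff.2 (mem_cluster.2 rfl)
  have prod_union {U A : Finset (Fin n)} (hA : A ∈ powersetCard (k - 1) (U \ {i})) :
      ∏ j ∈ (A ∪ {i}) \ {i}, y j = ∏ j ∈ A, y j := by
    rw [union_sdiff_cancel_right
      (disjoint_of_subset_left (mem_powersetCard.1 hA).1 sdiff_disjoint)]
  have all_le : ∑ A ∈ powersetCard (k - 1) (univ \ {i}), (∏ j ∈ (A ∪ {i}) \ {i}, y j - 1) ≤
      (n * Real.cosh θ) ^ (k - 1) / (k - 1).factorial - (n - 1).choose (k - 1) := by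
    rw [sum_congr rfl fun A hA => by rw [prod_union hA], sum_sub_distrib]
    have := sum_powersetCard_prod_exp_le hσ i θ (univ \ {i}) (k - 1)
    simpa [card_sdiff_of_subset (subset_univ {i})] using this
  have cluster_eq : ∑ A ∈ powersetCard (k - 1) (cluster σ i \ {i}),
      (∏ j ∈ (A ∪ {i}) \ {i}, y j - 1) =
      (n / 2 - 1).choose (k - 1) * (Real.exp (-θ) ^ (k - 1) - 1) := by
    have prod_eq {A} (hA : A ∈ powersetCard (k - 1) (cluster σ i \ {i})) :
        ∏ j ∈ A, y j = Real.exp (-θ) ^ (k - 1) := by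
      obtain ⟨hA, hcard⟩ := mem_powersetCard.1 hA
      rw [← hcard, prod_exp_mul_sgn_of_subset_cluster (hA.trans sdiff_subset)]
    rw [sum_congr rfl fun A hA => by rw [prod_union hA, prod_eq hA]]
    simp [card_sdiff_of_subset hi, card_cluster hσ, mul_sub]
  rw [sum_edgeProb_mul_exp_sub_one_eq,
    sum_edgeP_mul p q σ (card_singleton i ▸ hk) (mem_singleton_self i)
      fun e => ∏ j ∈ e \ {i}, y j - 1, if_pos hi, card_singleton, cluster_eq]
  gcongr
  exact q.2.1

lemma bernoulliPi_real_signedDegree_le_le (hk : 1 ≤ k) (p q : unitInterval) {σ : Fin n → Bool}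
    (hσ : balanced σ) (i : Fin n) {θ : ℝ} (hθ : 0 < θ) (t : ℝ) :
    (bernoulliPi (edgeProb (k := k) p q σ)).real {E | signedDegree σ (Wmat E) i ≤ t} ≤
      Real.exp (q * ((n * Real.cosh θ) ^ (k - 1) / (k - 1).factorial - (n - 1).choose (k - 1)) +
        (p - q) * ((n / 2 - 1).choose (k - 1) * (Real.exp (-θ) ^ (k - 1) - 1)) + θ * t) := by
  have signedDegree_le_iff (E : KSet n k → Bool) : signedDegree σ (Wmat E) i ≤ t ↔
      -t ≤ sdpObj (Wmat E) ((0 : Matrix _ _ ℝ).updateRow i fun j => -(sgn σ i * sgn σ j)) := by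
    simp only [sdpObj_updateRow_zero, mul_neg, sum_neg_distrib, neg_le_neg_iff, signedDegree]
  simp_rw [signedDegree_le_iff]
  refine (bernoulliPi_real_le_sdpObj_le _ _ hθ (-t)).trans (Real.exp_le_exp.2 ?_)
  linarith [sum_edgeProb_mul_exp_sub_one_le hk p q hσ i θ]

end Counting

/-! ### The rate of the signed degrees -/

lemma exp_neg_le_one_sub_add_sq_div_two {u : ℝ} (hu : 0 ≤ u) :
    Real.exp (-u) ≤ 1 - u + u ^ 2 / 2 := by
  have pos : 0 < 1 - u + u ^ 2 / 2 := by nlinarith [sq_nonneg (u - 1)]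
  rw [Real.exp_neg, inv_le_comm₀ (Real.exp_pos u) pos]
  refine le_trans ?_ (Real.quadratic_le_exp_of_nonneg hu)
  rw [inv_le_iff_one_le_mul₀ pos]
  nlinarith [sq_nonneg (u ^ 2)]

lemma cosh_div_natCast_pow_le {κ : ℕ} (hκ : κ ≠ 0) (y : ℝ) :
    Real.cosh (y / κ) ^ κ ≤ Real.exp (y ^ 2 / (2 * κ)) := by
  calc Real.cosh (y / κ) ^ κ ≤ Real.exp ((y / κ) ^ 2 / 2) ^ κ :=
        pow_le_pow_left₀ (Real.cosh_pos _).le (Real.cosh_le_exp_half_sq _) κ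
    _ = Real.exp (y ^ 2 / (2 * κ)) := by
        rw [← Real.exp_nat_mul]
        congr 1
        field_simp

lemma cosh_rate_lt_neg_one {κ : ℕ} {y β : ℝ} (hy : 0 < y) (hβ : 0 ≤ β)
    (h : (κ + 1) * y + β * y ^ 2 < κ) :
    β * (Real.cosh (y / κ) ^ κ - 1) + 2 / y * (Real.exp (-(y / κ)) ^ κ - 1) < -1 := by
  have hκ : (0 : ℝ) < κ := lt_of_le_of_lt (by positivity) h
  have : (1 : ℝ) ≤ κ := by exact_mod_cast hκ
  have hy₁ : y < 1 := by nlinarith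
  have exp_term : 2 / y * (Real.exp (-(y / κ)) ^ κ - 1) ≤ y - 2 := by
    rw [← Real.exp_nat_mul, mul_neg, mul_div_cancel₀ y hκ.ne']
    calc 2 / y * (Real.exp (-y) - 1) ≤ 2 / y * (-y + y ^ 2 / 2) := by
          gcongr
          linarith [exp_neg_le_one_sub_add_sq_div_two hy.le]
      _ = y - 2 := by
          field_simp
          ring
  set v := y ^ 2 / (2 * κ) with hv
  have v_nonneg : 0 ≤ v := by positivity
  have v_lt_one : v < 1 := by
    rw [hv, div_lt_one (by positivity)]
    nlinarith
  have cosh_term : β * (Real.cosh (y / κ) ^ κ - 1) ≤ β * v * (1 + v) := by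
    have exp_le := (abs_le.1 (Real.abs_exp_sub_one_sub_id_le
      ((abs_of_nonneg v_nonneg).trans_le v_lt_one.le))).2
    rw [mul_assoc]
    refine mul_le_mul_of_nonneg_left ?_ hβ
    linarith [cosh_div_natCast_pow_le (Nat.cast_pos.1 hκ).ne' y]
  have beta_mul_le : β * v ≤ (1 - y) / 2 := by
    rw [hv, ← mul_div_assoc, div_le_div_iff₀ (by positivity) two_pos]
    nlinarith
  nlinarith

/-- The exponent, in units of `log n` with `n = 2 m`, of the Chernoff bound with parameter `θ` for
the lower tail of the signed degree of a vertex. -/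
noncomputable def degreeRate (κ : ℕ) (α β θ : ℝ) (m : ℕ) : ℝ :=
  β * ((2 * m * Real.cosh θ) ^ κ / κ.factorial / (2 * m - 1).choose κ - 1) +
    (α - β) * ((m - 1).choose κ / (2 * m - 1).choose κ * (Real.exp (-θ) ^ κ - 1))

lemma tendsto_choose_mul_sub_one_div_pow (κ : ℕ) {c : ℕ} (hc : 1 ≤ c) :
    Tendsto (fun m : ℕ => ((c * m - 1).choose κ : ℝ) / (m : ℝ) ^ κ) atTop
      (𝓝 ((c : ℝ) ^ κ / κ.factorial)) := by
  have tendsto_atTop : Tendsto (fun m : ℕ => c * m - 1) atTop atTop :=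
    (tendsto_sub_atTop_nat 1).comp (tendsto_id.const_mul_atTop' hc)
  have tendsto_ratio : Tendsto (fun m : ℕ => ((c * m - 1 : ℕ) : ℝ) / m) atTop (𝓝 c) := by
    have : Tendsto (fun m : ℕ => (c : ℝ) - 1 / (m : ℝ)) atTop (𝓝 (c - 0)) :=
      tendsto_const_nhds.sub tendsto_one_div_atTop_nhds_zero_nat
    rw [sub_zero] at this
    refine this.congr' ?_
    filter_upwards [eventually_ge_atTop 1] with m hm
    have hm₀ : (m : ℝ) ≠ 0 := by positivity
    rw [Nat.cast_pred (Nat.mul_pos hc hm)]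
    push_cast
    field_simp
  refine ((((isEquivalent_choose κ).comp_tendsto tendsto_atTop).div
    (Asymptotics.IsEquivalent.refl (u := fun m : ℕ => (m : ℝ) ^ κ))).symm.tendsto_nhds ?_)
  refine ((tendsto_ratio.pow κ).div_const _).congr fun m => ?_
  simp only [Function.comp_apply, Pi.div_apply, div_pow, div_right_comm]

lemma tendsto_degreeRate (κ : ℕ) (α β θ : ℝ) :
    Tendsto (degreeRate κ α β θ) atTop
      (𝓝 (β * (Real.cosh θ ^ κ - 1) + (α - β) / 2 ^ κ * (Real.exp (-θ) ^ κ - 1))) := by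
  have choose_half := tendsto_choose_mul_sub_one_div_pow κ le_rfl
  have choose_all := tendsto_choose_mul_sub_one_div_pow κ one_le_two
  have limit_ne : ((2 : ℕ) : ℝ) ^ κ / κ.factorial ≠ 0 := by positivity
  have cosh_ratio := (tendsto_const_nhds (x := (2 * Real.cosh θ) ^ κ / κ.factorial)).div
    choose_all limit_ne
  have choose_ratio := choose_half.div choose_all limit_ne
  have := ((cosh_ratio.sub_const 1).const_mul β).add
    ((choose_ratio.mul_const (Real.exp (-θ) ^ κ - 1)).const_mul (α - β))
  convert this.congr' ?_ using 2
  · push_cast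
    simp only [mul_pow]
    field_simp
    ring
  · filter_upwards [eventually_ge_atTop 1] with m hm
    have hm₀ : (m : ℝ) ^ κ ≠ 0 := by positivity
    simp only [degreeRate, Pi.div_apply, one_mul, div_div_div_cancel_right₀ hm₀, mul_pow]
    field_simp

lemma exists_eventually_degreeRate_le {k : ℕ} (hk : 2 ≤ k) {α β : ℝ} (hβ : 0 ≤ β) (hαβ : β < α)
    (hI : 1 < ((k : ℝ) - 1) / 2 ^ (2 * k) * (α - β) ^ 2 /
      (((k : ℝ) / 2 ^ k) * α + (1 - (k : ℝ) / 2 ^ k) * β)) :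
    ∃ θ > 0, ∃ δ > 0, ∀ᶠ m in atTop, degreeRate (k - 1) α β θ m ≤ -(1 + 2 * δ) := by
  have hαβ' : 0 < α - β := sub_pos.2 hαβ
  have : (0 : ℝ) < k := by positivity
  have hk₁ : ((k - 1 : ℕ) : ℝ) = k - 1 := Nat.cast_pred (by omega)
  set y := 2 ^ k / (α - β) with hy
  have hy₀ : 0 < y := by positivity
  have rate_condition : ((k - 1 : ℕ) + 1) * y + β * y ^ 2 < (k - 1 : ℕ) := by
    have denom_eq : ((k : ℝ) / 2 ^ k) * α + (1 - (k : ℝ) / 2 ^ k) * β = k / y + β := by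
      rw [hy]
      field_simp
      ring
    have num_eq : ((k : ℝ) - 1) / 2 ^ (2 * k) * (α - β) ^ 2 = (k - 1) / y ^ 2 := by
      rw [hy, pow_mul']
      field_simp
    rw [denom_eq, num_eq, one_lt_div (by positivity), lt_div_iff₀ (by positivity)] at hI
    rw [hk₁]
    refine lt_of_eq_of_lt ?_ hI
    field_simp
    ring
  have two_div : 2 / y = (α - β) / 2 ^ (k - 1) := by
    rw [hy, ← Nat.sub_add_cancel (one_le_two.trans hk), pow_succ, Nat.add_sub_cancel]
    field_simp
  have rate_lt := cosh_rate_lt_neg_one hy₀ hβ rate_condition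
  obtain ⟨r, lt_r, r_lt⟩ := exists_between rate_lt
  have hκ : (0 : ℝ) < (k - 1 : ℕ) := by
    exact_mod_cast (by omega : 0 < k - 1)
  rw [two_div] at lt_r
  refine ⟨y / (k - 1 : ℕ), by positivity, (-1 - r) / 2, by linarith, ?_⟩
  filter_upwards [(tendsto_degreeRate _ _ _ _).eventually_lt_const lt_r] with m hm
  linarith

lemma pParam_nonneg (k n : ℕ) {α : ℝ} (hα : 0 ≤ α) : 0 ≤ pParam k α n := by
  unfold pParam
  positivity

lemma pParam_mono (k n : ℕ) : Monotone fun α => pParam k α n := fun α β hαβ => by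
  dsimp only [pParam]
  gcongr

lemma pParam_mul_choose {k n : ℕ} (hk : 2 ≤ k) (hkn : k ≤ n) (α : ℝ) :
    pParam k α n * (n - 2).choose (k - 2) = α * (k - 1) * Real.log n / (n - 1) := by
  obtain ⟨j, rfl⟩ := Nat.exists_eq_add_of_le' hk
  obtain ⟨t, rfl⟩ := Nat.exists_eq_add_of_le' (hk.trans hkn)
  have absorption : ((t : ℝ) + 1) * t.choose j = (t + 1).choose (j + 1) * (j + 1) := by
    exact_mod_cast Nat.add_one_mul_choose_eq t j
  have choose_pos : (0 : ℝ) < (t + 1).choose (j + 1) := by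
    exact_mod_cast Nat.choose_pos (by omega)
  have cast_sub_one (a : ℕ) : ((a + 2 : ℕ) : ℝ) - 1 = a + 1 := by push_cast; ring
  rw [cast_sub_one, cast_sub_one, pParam, Nat.add_sub_cancel, Nat.add_sub_cancel,
    Nat.add_succ_sub_one, Nat.add_succ_sub_one, div_mul_eq_mul_div,
    div_eq_div_iff choose_pos.ne' (by positivity)]
  linear_combination α * Real.log ((t + 2 : ℕ) : ℝ) * absorption

lemma pParam_mul_choose_le {k n : ℕ} (hk : 2 ≤ k) (hkn : k ≤ n) {α : ℝ} (hα : 0 ≤ α) :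
    pParam k α n * (n - 2).choose (k - 2) ≤ 2 * α * (k - 1) * Real.log n / n := by
  have hk' : (2 : ℝ) ≤ k := by exact_mod_cast hk
  have hn : (2 : ℝ) ≤ n := by exact_mod_cast hk.trans hkn
  have log_nonneg : 0 ≤ Real.log n := Real.log_natCast_nonneg n
  have factor_nonneg : 0 ≤ α * (k - 1) * Real.log n :=
    mul_nonneg (mul_nonneg hα (by linarith)) log_nonneg
  rw [pParam_mul_choose hk hkn, div_le_div_iff₀ (by linarith) (by linarith)]
  nlinarith

lemma eventually_pParam_le_one {k : ℕ} (hk : 2 ≤ k) {α : ℝ} (hα : 0 ≤ α) :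
    ∀ᶠ n in atTop, pParam k α n ≤ 1 := by
  have log_div : Tendsto (fun n : ℕ => 2 * α * (k - 1) * (Real.log n / n)) atTop
      (𝓝 (2 * α * (k - 1) * 0)) :=
    (Real.isLittleO_log_id_atTop.tendsto_div_nhds_zero.comp
      tendsto_natCast_atTop_atTop).const_mul _
  rw [mul_zero] at log_div
  filter_upwards [log_div.eventually_lt_const one_pos, eventually_ge_atTop k] with n hn hkn
  have one_le_choose : (1 : ℝ) ≤ (n - 2).choose (k - 2) := by
    exact_mod_cast Nat.choose_pos (Nat.sub_le_sub_right hkn 2)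
  calc pParam k α n ≤ pParam k α n * (n - 2).choose (k - 2) :=
        le_mul_of_one_le_right (pParam_nonneg k n hα) one_le_choose
    _ ≤ 2 * α * (k - 1) * Real.log n / n := pParam_mul_choose_le hk hkn hα
    _ ≤ 1 := by rw [mul_div_assoc]; exact hn.le

lemma bernoulliPi_real_signedDegree_le_mul_log_le {k m : ℕ} (hk : 1 ≤ k) (hkm : k ≤ 2 * m)
    {α β : ℝ} {p q : unitInterval} (hp : (p : ℝ) = pParam k α (2 * m))
    (hq : (q : ℝ) = pParam k β (2 * m)) {σ : Fin (2 * m) → Bool} (hσ : balanced σ)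
    (i : Fin (2 * m)) {θ : ℝ} (hθ : 0 < θ) (ε : ℝ) :
    (bernoulliPi (edgeProb (k := k) p q σ)).real
        {E | signedDegree σ (Wmat E) i ≤ ε * Real.log (2 * m : ℕ)} ≤
      Real.exp ((degreeRate (k - 1) α β θ m + θ * ε) * Real.log (2 * m : ℕ)) := by
  have choose_pos : (0 : ℝ) < (2 * m - 1).choose (k - 1) := by
    exact_mod_cast Nat.choose_pos (Nat.sub_le_sub_right hkm 1)
  refine (bernoulliPi_real_signedDegree_le_le hk p q hσ i hθ _).trans_eq ?_
  rw [hp, hq, Nat.mul_div_cancel_left m two_pos]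
  unfold pParam degreeRate
  congr 1
  push_cast
  field_simp

lemma exists_eventually_real_exists_signedDegree_le {k : ℕ} (hk : 2 ≤ k) {α β : ℝ} (hβ : 0 ≤ β)
    (hαβ : β < α)
    (hI : 1 < ((k : ℝ) - 1) / 2 ^ (2 * k) * (α - β) ^ 2 /
      (((k : ℝ) / 2 ^ k) * α + (1 - (k : ℝ) / 2 ^ k) * β)) :
    ∃ ε > 0, ∃ δ > 0, ∀ᶠ m : ℕ in atTop, ∀ p q : unitInterval,
      (p : ℝ) = pParam k α (2 * m) → (q : ℝ) = pParam k β (2 * m) →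
      ∀ σ : Fin (2 * m) → Bool, balanced σ →
        (bernoulliPi (edgeProb (k := k) p q σ)).real
            {E | ∃ i, signedDegree σ (Wmat E) i ≤ ε * Real.log (2 * m : ℕ)} ≤
          Real.exp (-(δ * Real.log (2 * m : ℕ))) := by
  obtain ⟨θ, hθ, δ, hδ, rate_le⟩ := exists_eventually_degreeRate_le hk hβ hαβ hI
  refine ⟨δ / θ, by positivity, δ, hδ, ?_⟩
  filter_upwards [rate_le, eventually_ge_atTop k] with m hm hkm p q hp hq σ hσ
  have m_pos : 0 < m := by omega
  set L := Real.log (2 * m : ℕ) with hL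
  have : 0 ≤ L := Real.log_natCast_nonneg _
  calc (bernoulliPi (edgeProb (k := k) p q σ)).real
        {E | ∃ i, signedDegree σ (Wmat E) i ≤ δ / θ * L}
      ≤ ∑ i, (bernoulliPi (edgeProb (k := k) p q σ)).real
          {E | signedDegree σ (Wmat E) i ≤ δ / θ * L} := by
        simpa only [mem_univ, true_and] using
          measureReal_setOf_exists_mem_le (bernoulliPi (edgeProb (k := k) p q σ)) univ
            fun i E => signedDegree σ (Wmat E) i ≤ δ / θ * L
    _ ≤ ∑ _i : Fin (2 * m), Real.exp (-(1 + δ) * L) := by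
        refine sum_le_sum fun i _ => (bernoulliPi_real_signedDegree_le_mul_log_le
          (one_le_two.trans hk) (by omega) hp hq hσ i hθ _).trans ?_
        gcongr
        rw [mul_div_cancel₀ δ hθ.ne']
        linarith
    _ = Real.exp (-(δ * L)) := by
        rw [sum_const, card_univ, Fintype.card_fin, nsmul_eq_mul,
          ← Real.exp_log (x := (2 * m : ℕ)) (by positivity), ← hL, ← Real.exp_add]
        congr 1
        ring

/-! ### Recovery with high probability -/

lemma prEvent_eq_sum_sigProb_mul {n k : ℕ} (p q : unitInterval)
    (P : (Fin n → Bool) → (KSet n k → Bool) → Prop) :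
    prEvent n k p q P =
      ∑ σ, sigProb n σ * (bernoulliPi (edgeProb (k := k) p q σ)).real {E | P σ E} := by
  simp only [prEvent, hypProb, bernoulliPi_real_setOf, coe_edgeProb, mul_sum, mul_assoc]
  congr!

lemma sigProb_nonneg {n : ℕ} (σ : Fin n → Bool) : 0 ≤ sigProb n σ := by
  unfold sigProb
  positivity

lemma exists_balanced (m : ℕ) : ∃ σ : Fin (2 * m) → Bool, balanced σ := by
  refine ⟨fun i => decide ((i : ℕ) < m), ?_⟩
  simp only [balanced, decide_eq_true_eq, Fin.card_filter_val_lt]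
  omega

lemma sum_sigProb (m : ℕ) : ∑ σ, sigProb (2 * m) σ = 1 := by
  obtain ⟨σ, hσ⟩ := exists_balanced m
  have card_ne_zero : (#{τ : Fin (2 * m) → Bool | balanced τ} : ℝ) ≠ 0 :=
    Nat.cast_ne_zero.2 (card_ne_zero_of_mem (mem_filter.2 ⟨mem_univ σ, hσ⟩))
  simp only [sigProb]
  rw [← sum_filter, sum_const, nsmul_eq_mul, mul_one_div_cancel card_ne_zero]

lemma prEvent_mem_Icc {m k : ℕ} (p q : unitInterval)
    {P : (Fin (2 * m) → Bool) → (KSet (2 * m) k → Bool) → Prop} {η : ℝ}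
    (h : ∀ σ, balanced σ → (bernoulliPi (edgeProb (k := k) p q σ)).real {E | ¬P σ E} ≤ η) :
    prEvent (2 * m) k p q P ∈ Set.Icc (1 - η) 1 := by
  rw [prEvent_eq_sum_sigProb_mul]
  constructor
  · calc 1 - η = ∑ σ, sigProb (2 * m) σ * (1 - η) := by rw [← sum_mul, sum_sigProb, one_mul]
      _ ≤ _ := sum_le_sum fun σ _ => ?_
    by_cases hσ : balanced σ
    · have compl := probReal_compl_eq_one_sub (μ := bernoulliPi (edgeProb (k := k) p q σ))
        (Set.toFinite {E | P σ E}).measurableSet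
      refine mul_le_mul_of_nonneg_left ?_ (sigProb_nonneg σ)
      linarith [compl.symm.trans_le (h σ hσ)]
    · simp only [sigProb, if_neg hσ, zero_mul, le_refl]
  · calc _ ≤ ∑ σ, sigProb (2 * m) σ * 1 := by
          gcongr with σ
          · exact sigProb_nonneg σ
          · exact measureReal_le_one
      _ = 1 := by rw [← sum_mul, sum_sigProb, one_mul]

lemma sdpUniqueOpt_outer_of_fluctuation_le {n k : ℕ} (hk : 2 ≤ k) {p q : unitInterval}
    (hqp : q ≤ p) {σ : Fin n → Bool} (hσ : balanced σ) {E : KSet n k → Bool} {ε₁ ε₂ : ℝ}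
    (hε : ε₂ < ε₁) (hdeg : ∀ i, ε₁ ≤ signedDegree σ (Wmat E) i)
    (hfluct : ∀ w : Fin n → ℝ,
      w ⬝ᵥ (Wmat E - meanAdj (edgeProb (k := k) p q σ)) *ᵥ w ≤ ε₂ * (w ⬝ᵥ w)) :
    sdpUniqueOpt (Wmat E) (outer σ) := by
  refine sdpUniqueOpt_outer hσ (.ext fun i j => Wmat_symm E j i) hε hdeg fun w hw hσw => ?_
  have mean_nonpos := dotProduct_meanAdj_edgeProb_mulVec_nonpos hk hqp hσ hw hσw
  have fluctuation := hfluct w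
  rw [sub_mulVec, dotProduct_sub] at fluctuation
  linarith

lemma eventually_real_exists_lt_fluctuation_le {k : ℕ} (hk : 2 ≤ k) {α ε : ℝ} (hα : 0 ≤ α)
    (hε : 0 < ε) :
    ∀ᶠ n : ℕ in atTop, ∀ p q : unitInterval, (p : ℝ) = pParam k α n → q ≤ p →
      ∀ σ : Fin n → Bool, (bernoulliPi (edgeProb (k := k) p q σ)).real
        {E | ∃ y : Fin n → ℝ, ε * Real.log n * (y ⬝ᵥ y) <
          y ⬝ᵥ (Wmat E - meanAdj (edgeProb (k := k) p q σ)) *ᵥ y} ≤ 3 * (n : ℝ)⁻¹ := by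
  have hk' : (2 : ℝ) ≤ k := by exact_mod_cast hk
  filter_upwards [eventually_real_exists_lt_dotProduct_mulVec_le k
    (mul_nonneg (mul_nonneg two_pos.le hα) (by linarith : (0 : ℝ) ≤ k - 1)) hε,
    eventually_ge_atTop k] with n tail hkn p q hp hqp σ
  refine tail _ fun i j => (meanAdj_edgeProb_le hk hqp σ i j).trans ?_
  rw [hp]
  exact pParam_mul_choose_le hk hkn hα

lemma tendsto_two_mul_atTop : Tendsto (fun m : ℕ => 2 * m) atTop atTop :=
  tendsto_id.const_mul_atTop' two_pos

lemma exists_eventually_real_not_sdpUniqueOpt_le {k : ℕ} (hk : 2 ≤ k) {α β : ℝ} (hβ : 0 ≤ β)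
    (hαβ : β < α)
    (hI : 1 < ((k : ℝ) - 1) / 2 ^ (2 * k) * (α - β) ^ 2 /
      (((k : ℝ) / 2 ^ k) * α + (1 - (k : ℝ) / 2 ^ k) * β)) :
    ∃ δ > 0, ∀ᶠ m : ℕ in atTop, ∀ p q : unitInterval,
      (p : ℝ) = pParam k α (2 * m) → (q : ℝ) = pParam k β (2 * m) →
      ∀ σ : Fin (2 * m) → Bool, balanced σ →
        (bernoulliPi (edgeProb (k := k) p q σ)).real
            {E | ¬sdpUniqueOpt (Wmat E) (outer σ)} ≤
          Real.exp (-(δ * Real.log (2 * m : ℕ))) + 3 * ((2 * m : ℕ) : ℝ)⁻¹ := by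
  obtain ⟨ε, hε, δ, hδ, degree_tail⟩ :=
    exists_eventually_real_exists_signedDegree_le hk hβ hαβ hI
  have fluctuation_tail := tendsto_two_mul_atTop.eventually
    (eventually_real_exists_lt_fluctuation_le hk (hβ.trans hαβ.le) (half_pos hε))
  refine ⟨δ, hδ, ?_⟩
  filter_upwards [degree_tail, fluctuation_tail, eventually_ge_atTop 1]
    with m degree_tail fluctuation_tail hm p q hp hq σ hσ
  have hqp : q ≤ p := by
    rw [← Subtype.coe_le_coe, hp, hq]
    exact pParam_mono k _ hαβ.le
  have log_pos : 0 < Real.log (2 * m : ℕ) := Real.log_pos (by exact_mod_cast (by omega))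
  refine (measureReal_mono fun E failure => ?_).trans ((measureReal_union_le _ _).trans
    (add_le_add (degree_tail p q hp hq σ hσ) (fluctuation_tail p q hp hqp σ)))
  contrapose! failure
  simp only [Set.mem_union, Set.mem_ofPred_eq, not_or, not_exists, not_le, not_lt] at failure ⊢
  exact not_not.2 (sdpUniqueOpt_outer_of_fluctuation_le hk hqp hσ
    (mul_lt_mul_of_pos_right (half_lt_self hε) log_pos) (fun i => (failure.1 i).le) failure.2)

/-- If `α > β > 0` and `I_sdp(α,β) > 1` then the SDP with input `W(ℋ)`
has `σσᵀ` as its unique optimal solution with probability `1 - o(1)`. -/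
theorem sdp_recovery (k : ℕ) (hk : 2 ≤ k) (α β : ℝ) (hβ : 0 < β) (hαβ : β < α)
    (hI : 1 < ((k : ℝ) - 1) / 2 ^ (2 * k) * (α - β) ^ 2 /
        (((k : ℝ) / 2 ^ k) * α + (1 - (k : ℝ) / 2 ^ k) * β)) :
    Tendsto (fun m : ℕ =>
        prEvent (2 * m) k (pParam k α (2 * m)) (pParam k β (2 * m))
          (fun σ E => sdpUniqueOpt (Wmat E) (outer σ)))
      atTop (nhds 1) := by
  have tendsto_cast : Tendsto (fun m : ℕ => ((2 * m : ℕ) : ℝ)) atTop atTop :=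
    tendsto_natCast_atTop_atTop.comp tendsto_two_mul_atTop
  obtain ⟨δ, hδ, failure_le⟩ := exists_eventually_real_not_sdpUniqueOpt_le hk hβ.le hαβ hI
  have error_tendsto : Tendsto (fun m : ℕ => Real.exp (-(δ * Real.log (2 * m : ℕ))) +
      3 * ((2 * m : ℕ) : ℝ)⁻¹) atTop (𝓝 (0 + 3 * 0)) :=
    (Real.tendsto_exp_neg_atTop_nhds_zero.comp
      ((Real.tendsto_log_atTop.comp tendsto_cast).const_mul_atTop hδ)).add
      ((tendsto_inv_atTop_zero.comp tendsto_cast).const_mul 3)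
  have prEvent_mem : ∀ᶠ m : ℕ in atTop, prEvent (2 * m) k (pParam k α (2 * m))
      (pParam k β (2 * m)) (fun σ E => sdpUniqueOpt (Wmat E) (outer σ)) ∈
      Set.Icc (1 - (Real.exp (-(δ * Real.log (2 * m : ℕ))) + 3 * ((2 * m : ℕ) : ℝ)⁻¹)) 1 := by
    have hα := (hβ.trans hαβ).le
    filter_upwards [failure_le, tendsto_two_mul_atTop.eventually (eventually_pParam_le_one hk hα),
      tendsto_two_mul_atTop.eventually (eventually_pParam_le_one hk hβ.le)] with m failure_le hp hq
    exact prEvent_mem_Icc ⟨_, pParam_nonneg k _ hα, hp⟩ ⟨_, pParam_nonneg k _ hβ.le, hq⟩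
      (failure_le _ _ rfl rfl)
  refine tendsto_of_tendsto_of_tendsto_of_le_of_le' ?_ tendsto_const_nhds
    (prEvent_mem.mono fun _ h => h.1) (prEvent_mem.mono fun _ h => h.2)
  simpa only [mul_zero, add_zero, sub_zero] using error_tendsto.const_sub 1
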